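/- Let Γ be the ideal of graded *-identities of a finitely generated G-graded PI-algebra A with graded involution over a field F of characteristic zero, where G is a finite abelian group. Then Γ contains the ideal of graded *-identities of some finite dimensional G-graded algebra with involution, namely of B ⊗_F F[G] where B is a finite dimensional algebra with involution satisfying the same (non-graded) *-identities as A. -/

import Mathlib

/-- Variables of the free graded `*`-algebra: `inl (i, θ)` is the symmetric variable
`y_{iθ}`, `inr (i, θ)` is the skew-symmetric variable `z_{iθ}`, of `G`-degree `θ`. -/
def GIVar (G : Type) : Type := (ℕ × G) ⊕ (ℕ × G)

/-- A `G`-graded associative `F`-algebra with a graded involution. -/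
structure GrStarAlgebra (F G : Type) [Field F] [AddCommGroup G] [DecidableEq G] where
  carrier : Type
  [ringInst : Ring carrier]
  [algInst : Algebra F carrier]
  gr : G → Submodule F carrier
  s : carrier →ₗ[F] carrier
  internal : DirectSum.IsInternal gr
  gmul : ∀ θ₁ θ₂ : G, ∀ x ∈ gr θ₁, ∀ y ∈ gr θ₂, x * y ∈ gr (θ₁ + θ₂)
  anti : ∀ x y : carrier, s (x * y) = s y * s x
  sinv : ∀ x : carrier, s (s x) = x
  sgraded : ∀ θ : G, ∀ x ∈ gr θ, s x ∈ gr θ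

attribute [instance] GrStarAlgebra.ringInst GrStarAlgebra.algInst

/-- The set of graded `*`-identities of a graded `*`-algebra `A`: the elements of the
free algebra `F⟨Y,Z⟩` vanishing under every admissible graded evaluation, i.e. every
algebra map sending each `y_{iθ}` to a symmetric element of degree `θ` and each
`z_{iθ}` to a skew-symmetric element of degree `θ`. -/
def giIdeal (F G : Type) [Field F] [AddCommGroup G] [DecidableEq G] (A : GrStarAlgebra F G) :
    Set (FreeAlgebra F (GIVar G)) :=
  {f | ∀ φ : FreeAlgebra F (GIVar G) →ₐ[F] A.carrier,
    (∀ v : ℕ × G, φ (FreeAlgebra.ι F (Sum.inl v)) ∈ A.gr v.2 ∧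
      A.s (φ (FreeAlgebra.ι F (Sum.inl v))) = φ (FreeAlgebra.ι F (Sum.inl v))) →
    (∀ v : ℕ × G, φ (FreeAlgebra.ι F (Sum.inr v)) ∈ A.gr v.2 ∧
      A.s (φ (FreeAlgebra.ι F (Sum.inr v))) = - φ (FreeAlgebra.ι F (Sum.inr v))) →
    φ f = 0}

/-!
Every finitely generated PI algebra `A` satisfies all identities of `N × N` matrices for some `N`,
and the graded `*`-identities of the group algebra of `M_N × M_Nᵒᵖ`, with the exchange involution,
are in particular identities of `M_N`.

For the first fact, codimension growth turns a polynomial identity into a multilinear identity that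
holds for all words with coefficients in `A`, and finite generation turns the latter into Capelli
identities. One inducts on the number of alternating variables. The quotient of `A` by the ideal
generated by the values of the smaller Capelli polynomials satisfies matrix identities by induction.
A product of two such values is a value of a multilinear function alternating in two sets of
variables. On these functions the traces of left multiplications commute with each other, and
exchanging an external factor with the alternating variables is a polarized Cayley–Hamilton
identity with the traces as coefficients. By the Nagata–Higman theorem, over the commutative ring
generated by the traces, `A` therefore acts on these functions through matrices. Finally, by Lewin's
theorem, a matrix identity of size `s + 2N` lies in the product of the ideals of identities of
matrices of sizes `s`, `N` and `N`, so it vanishes on `A`.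
-/

section PolynomialIdentities

/-- A polynomial identity of the algebra `A`: a noncommutative polynomial vanishing under every
evaluation in `A`. -/
def IsPolyIdentity {F X : Type*} (A : Type*) [CommSemiring F] [Semiring A] [Algebra F A]
    (f : FreeAlgebra F X) : Prop :=
  ∀ φ : FreeAlgebra F X →ₐ[F] A, φ f = 0

/-- The `F`-algebra `A` satisfies every polynomial identity of the `N × N` matrices over `F`. -/
def SatisfiesMatrixIdentities (F A : Type*) [CommSemiring F] [Semiring A] [Algebra F A]
    (N : ℕ) : Prop :=
  ∀ (X : Type) (f : FreeAlgebra F X),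
    IsPolyIdentity (Matrix (Fin N) (Fin N) F) f → IsPolyIdentity A f

variable {F X : Type*}

lemma IsPolyIdentity.of_injective [CommSemiring F] {A B : Type*} [Semiring A] [Algebra F A]
    [Semiring B] [Algebra F B] {f : FreeAlgebra F X} (hf : IsPolyIdentity B f) (e : A →ₐ[F] B)
    (he : Function.Injective e) : IsPolyIdentity A f := fun φ =>
  he ((hf (e.comp φ)).trans (map_zero e).symm)

/-- The proof evaluates the identity on generic matrices: their entries are polynomials over `F`
that vanish at every point, hence are zero. -/
lemma IsPolyIdentity.matrix_of_matrix [CommRing F] [IsDomain F] [Infinite F] {ι : Type*}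
    [Fintype ι] [DecidableEq ι] {f : FreeAlgebra F X} (hf : IsPolyIdentity (Matrix ι ι F) f)
    (K : Type*) [CommRing K] [Algebra F K] : IsPolyIdentity (Matrix ι ι K) f := by
  intro ψ
  let generic : FreeAlgebra F X →ₐ[F] Matrix ι ι (MvPolynomial (X × ι × ι) F) :=
    FreeAlgebra.lift F fun x => Matrix.of fun i j => MvPolynomial.X (x, i, j)
  have hgeneric : generic f = 0 := by
    ext1 i j
    refine MvPolynomial.funext fun v => ?_
    simpa [MvPolynomial.aeval_eq_eval] using
      congrFun₂ (hf ((MvPolynomial.aeval v).mapMatrix.comp generic)) i j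
  have hψ : ψ = (MvPolynomial.aeval fun p : X × ι × ι =>
      ψ (FreeAlgebra.ι F p.1) p.2.1 p.2.2).mapMatrix.comp generic := by
    ext x i j
    simp [generic]
  rw [hψ, AlgHom.comp_apply, hgeneric, map_zero]

end PolynomialIdentities

section GroupAlgebra

open AddMonoidAlgebra

variable {F B : Type*} [CommRing F] [Ring B] [Algebra F B]

lemma isInternal_range_lsingle {M : Type*} [DecidableEq M] :
    DirectSum.IsInternal fun θ : M =>
      LinearMap.range (lsingle θ : B →ₗ[F] AddMonoidAlgebra B M) := by
  let e : (M →₀ B) ≃ₗ[F] AddMonoidAlgebra B M := (coeffLinearEquiv F).symm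
  have hrange : (fun θ => LinearMap.range (lsingle θ : B →ₗ[F] AddMonoidAlgebra B M)) =
      fun θ => (LinearMap.range (Finsupp.lsingle θ : B →ₗ[F] M →₀ B)).map e.toLinearMap := by
    funext θ
    rw [← LinearMap.range_comp]
    rfl
  rw [hrange]
  refine DirectSum.isInternal_submodule_of_iSupIndep_of_iSup_eq_top
    (e.toLinearMap.iSupIndep_map e.injective (iSupIndep_range_lsingle M F B)) ?_
  rw [← Submodule.map_iSup, Finsupp.iSup_lsingle_range, Submodule.map_top, LinearEquiv.range]

/-- The endomorphism of the group algebra with coefficients in `B` that acts on the coefficients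
by `s` and fixes the group elements. -/
noncomputable def mapCoeff (M : Type*) (s : B →ₗ[F] B) :
    AddMonoidAlgebra B M →ₗ[F] AddMonoidAlgebra B M :=
  (coeffLinearEquiv F).symm.toLinearMap ∘ₗ Finsupp.mapRange.linearMap s ∘ₗ
    (coeffLinearEquiv F).toLinearMap

@[simp]
lemma mapCoeff_single {M : Type*} (s : B →ₗ[F] B) (θ : M) (b : B) :
    mapCoeff M s (single θ b) = single θ (s b) := by
  simp [mapCoeff]

lemma mapCoeff_mul {M : Type*} [AddCommMonoid M] {s : B →ₗ[F] B}
    (anti : ∀ a b, s (a * b) = s b * s a) (x y : AddMonoidAlgebra B M) :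
    mapCoeff M s (x * y) = mapCoeff M s y * mapCoeff M s x := by
  induction x using AddMonoidAlgebra.induction_linear with
  | zero => simp
  | add x x' hx hx' => simp only [add_mul, mul_add, map_add, hx, hx']
  | single θ a =>
    induction y using AddMonoidAlgebra.induction_linear with
    | zero => simp
    | add y y' hy hy' => simp only [add_mul, mul_add, map_add, hy, hy']
    | single η b => simp [single_mul_single, anti, add_comm]

lemma mapCoeff_mapCoeff {M : Type*} {s : B →ₗ[F] B} (sinv : ∀ b, s (s b) = b)
    (x : AddMonoidAlgebra B M) : mapCoeff M s (mapCoeff M s x) = x := by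
  induction x using AddMonoidAlgebra.induction_linear with
  | zero => simp
  | add x y hx hy => simp only [map_add, hx, hy]
  | single θ b => simp [sinv]

/-- The group algebra `B ⊗ F[G]` of an algebra `B` with involution `s`, graded by
`deg (b ⊗ θ) = θ` and with involution `(b ⊗ θ)* = s b ⊗ θ`. -/
noncomputable def groupStarAlgebra (F G B : Type) [Field F] [AddCommGroup G] [DecidableEq G]
    [Ring B] [Algebra F B] (s : B →ₗ[F] B) (anti : ∀ a b, s (a * b) = s b * s a)
    (sinv : ∀ b, s (s b) = b) : GrStarAlgebra F G where
  carrier := AddMonoidAlgebra B G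
  gr θ := LinearMap.range (lsingle θ : B →ₗ[F] AddMonoidAlgebra B G)
  s := mapCoeff G s
  internal := isInternal_range_lsingle
  gmul := by
    rintro θ η _ ⟨a, rfl⟩ _ ⟨b, rfl⟩
    exact ⟨a * b, (single_mul_single ..).symm⟩
  anti := mapCoeff_mul anti
  sinv := mapCoeff_mapCoeff sinv
  sgraded := by
    rintro θ _ ⟨b, rfl⟩
    exact ⟨s b, (mapCoeff_single s θ b).symm⟩

end GroupAlgebra

section Exchange

open AddMonoidAlgebra MulOpposite

/-- The `G`-degree `θ` of the variables `y_{iθ}` and `z_{iθ}`. -/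
def GIVar.degree {G : Type} (v : GIVar G) : G := Sum.elim Prod.snd Prod.snd v

/-- The eigenvalue of the involution on a variable: `1` on `y_{iθ}` and `-1` on `z_{iθ}`. -/
def GIVar.sign (F : Type*) [Ring F] {G : Type} (v : GIVar G) : F :=
  Sum.elim (fun _ => 1) (fun _ => -1) v

lemma GIVar.sign_mul_self (F : Type*) [Ring F] {G : Type} (v : GIVar G) :
    v.sign F * v.sign F = 1 := by
  rcases v with v | v <;> simp [GIVar.sign]

/-- The exchange involution `(a, b) ↦ (b, a)` of `D × Dᵐᵒᵖ`. -/
def exchangeInvolution (F D : Type*) [CommSemiring F] [Semiring D] [Algebra F D] :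
    D × Dᵐᵒᵖ →ₗ[F] D × Dᵐᵒᵖ :=
  ((opLinearEquiv F).symm.toLinearMap ∘ₗ LinearMap.snd F D Dᵐᵒᵖ).prod
    ((opLinearEquiv F).toLinearMap ∘ₗ LinearMap.fst F D Dᵐᵒᵖ)

@[simp]
lemma exchangeInvolution_apply {F D : Type*} [CommSemiring F] [Semiring D] [Algebra F D]
    (p : D × Dᵐᵒᵖ) : exchangeInvolution F D p = (unop p.2, op p.1) := rfl

variable {F G D : Type} [Field F] [AddCommGroup G] [DecidableEq G] [Ring D] [Algebra F D]

variable (F G D) in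
/-- The group algebra of `D × Dᵐᵒᵖ`, whose involution exchanges the two factors. -/
noncomputable def exchangeGroupAlgebra : GrStarAlgebra F G :=
  groupStarAlgebra F G (D × Dᵐᵒᵖ) (exchangeInvolution F D) (fun _ _ => rfl) fun _ => rfl

lemma finiteDimensional_exchangeGroupAlgebra [Finite G] [FiniteDimensional F D] :
    FiniteDimensional F (exchangeGroupAlgebra F G D).carrier :=
  Module.Finite.equiv (coeffLinearEquiv F : AddMonoidAlgebra (D × Dᵐᵒᵖ) G ≃ₗ[F] _).symm

/-- An evaluation `ψ` in `D` is the first coordinate of the admissible evaluation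
`v ↦ (ψ v, ± ψ v) ⊗ deg v`. -/
lemma isPolyIdentity_of_mem_giIdeal_exchangeGroupAlgebra {f : FreeAlgebra F (GIVar G)}
    (hf : f ∈ giIdeal F G (exchangeGroupAlgebra F G D)) : IsPolyIdentity D f := by
  intro ψ
  let eval : FreeAlgebra F (GIVar G) →ₐ[F] AddMonoidAlgebra (D × Dᵐᵒᵖ) G :=
    FreeAlgebra.lift F fun v =>
      single v.degree (ψ (FreeAlgebra.ι F v), v.sign F • op (ψ (FreeAlgebra.ι F v)))
  have heval_ι (v : GIVar G) : eval (FreeAlgebra.ι F v) =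
      single v.degree (ψ (FreeAlgebra.ι F v), v.sign F • op (ψ (FreeAlgebra.ι F v))) :=
    FreeAlgebra.lift_ι_apply _ _
  have hdegree (v : GIVar G) : eval (FreeAlgebra.ι F v) ∈
      LinearMap.range (lsingle v.degree : D × Dᵐᵒᵖ →ₗ[F] AddMonoidAlgebra (D × Dᵐᵒᵖ) G) :=
    ⟨_, (heval_ι v).symm⟩
  have hsign (v : GIVar G) : mapCoeff G (exchangeInvolution F D) (eval (FreeAlgebra.ι F v)) =
      v.sign F • eval (FreeAlgebra.ι F v) := by
    simp [heval_ι, smul_smul, GIVar.sign_mul_self]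
  have heval : eval f = 0 :=
    hf eval (fun v => ⟨hdegree (Sum.inl v), (hsign (Sum.inl v)).trans (one_smul F _)⟩)
      fun v => ⟨hdegree (Sum.inr v), (hsign (Sum.inr v)).trans (neg_one_smul F _)⟩
  let augmentation : AddMonoidAlgebra (D × Dᵐᵒᵖ) G →ₐ[F] D :=
    liftNCAlgHom (AlgHom.fst F D Dᵐᵒᵖ) (1 : Multiplicative G →* D) fun _ _ => by simp
  have hψ : ψ = augmentation.comp eval := by
    ext v
    simp only [AlgHom.comp_apply, Function.comp_apply, heval_ι]
    exact ((liftNC_single _ _ _ _).trans (mul_one _)).symm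
  rw [hψ, AlgHom.comp_apply, heval, map_zero]

end Exchange

section TensorProducts

open scoped TensorProduct
open LinearMap

lemma mem_range_map_subtype {F V W : Type*} [CommRing F] [AddCommGroup V] [Module F V]
    [AddCommGroup W] [Module F W] {I : Submodule F V} [Module.Flat F (V ⧸ I)]
    {J : Submodule F W} {t : V ⊗[F] W} (hI : t ∈ range (I.subtype.rTensor W))
    (hJ : t ∈ range (J.subtype.lTensor V)) :
    t ∈ range (TensorProduct.map I.subtype J.subtype) := by
  obtain ⟨u, rfl⟩ := hJ
  have hu : I.mkQ.rTensor J u = 0 := by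
    apply Module.Flat.lTensor_preserves_injective_linearMap (M := V ⧸ I) J.subtype
      J.injective_subtype
    rw [map_zero, ← comp_apply, lTensor_comp_rTensor, ← rTensor_comp_lTensor, comp_apply]
    exact (rTensor_mkQ W I).ge hI
  obtain ⟨w, rfl⟩ := (rTensor_mkQ J I).le hu
  exact ⟨w, by rw [← comp_apply, lTensor_comp_rTensor]⟩

variable {F V W α β : Type*} [Field F] [AddCommGroup V] [Module F V] [AddCommGroup W] [Module F W]

lemma tensor_eq_zero_of_rTensor_eq_zero {l : α → V →ₗ[F] F} (hl : ∀ v, (∀ a, l a v = 0) → v = 0)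
    {t : V ⊗[F] W} (ht : ∀ a, (l a).rTensor W t = 0) : t = 0 := by
  let b := Module.Basis.ofVectorSpace F W
  obtain ⟨c, rfl⟩ := TensorProduct.eq_repr_basis_right b t
  have hc (i) : c i = 0 := by
    refine hl _ fun a => ?_
    have hsum : Finsupp.linearCombination F b (c.mapRange (l a) (map_zero _)) = 0 := by
      rw [Finsupp.linearCombination_apply, Finsupp.sum_mapRange_index (by simp)]
      simpa [Finsupp.sum, map_sum] using congrArg (TensorProduct.lid F W) (ht a)
    simpa using DFunLike.congr_fun (linearIndependent_iff.mp b.linearIndependent _ hsum) i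
  simp [Finsupp.sum, hc]

lemma tensor_eq_zero_of_map_eq_zero {l : α → V →ₗ[F] F} {m : β → W →ₗ[F] F}
    (hl : ∀ v, (∀ a, l a v = 0) → v = 0) (hm : ∀ w, (∀ b, m b w = 0) → w = 0)
    {t : V ⊗[F] W} (ht : ∀ a b, TensorProduct.map (l a) (m b) t = 0) : t = 0 := by
  refine tensor_eq_zero_of_rTensor_eq_zero hl fun a => (TensorProduct.lid F W).injective ?_
  rw [map_zero]
  refine hm _ fun b => ?_
  have hlid : m b ∘ₗ (TensorProduct.lid F W).toLinearMap ∘ₗ (l a).rTensor W =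
      (TensorProduct.lid F F).toLinearMap ∘ₗ TensorProduct.map (l a) (m b) :=
    TensorProduct.ext' fun v w => by simp
  exact (DFunLike.congr_fun hlid t).trans (by simp [ht a b])

lemma map_mkQ_eq_zero_of_map_eq_zero {l : α → V →ₗ[F] F} {m : β → W →ₗ[F] F}
    {I : Submodule F V} {J : Submodule F W} (hI : ∀ v, v ∈ I ↔ ∀ a, l a v = 0)
    (hJ : ∀ w, w ∈ J ↔ ∀ b, m b w = 0) {t : V ⊗[F] W}
    (ht : ∀ a b, TensorProduct.map (l a) (m b) t = 0) :
    TensorProduct.map I.mkQ J.mkQ t = 0 := by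
  have hl (a) : I ≤ ker (l a) := fun v hv => (hI v).mp hv a
  have hm (b) : J ≤ ker (m b) := fun w hw => (hJ w).mp hw b
  refine tensor_eq_zero_of_map_eq_zero (l := fun a => I.liftQ (l a) (hl a))
    (m := fun b => J.liftQ (m b) (hm b)) ?_ ?_ fun a b => ?_
  · intro v hv
    obtain ⟨v, rfl⟩ := I.mkQ_surjective v
    simpa [hI] using hv
  · intro w hw
    obtain ⟨w, rfl⟩ := J.mkQ_surjective w
    simpa [hJ] using hw
  · rw [← comp_apply, ← TensorProduct.map_comp, Submodule.liftQ_mkQ, Submodule.liftQ_mkQ, ht]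

end TensorProducts

section TensorCommutator

open scoped TensorProduct
open LinearMap

variable {F A : Type*} [CommRing F] [Ring A] [Algebra F A]

/-- The map `u ⊗ v ↦ u a ⊗ v - u ⊗ a v`. -/
noncomputable def tensorCommutator (F : Type*) {A : Type*} [CommRing F] [Ring A] [Algebra F A]
    (a : A) : A ⊗[F] A →ₗ[F] A ⊗[F] A :=
  (mulRight F a).rTensor A - (mulLeft F a).lTensor A

@[simp]
lemma tensorCommutator_tmul (a u v : A) :
    tensorCommutator F a (u ⊗ₜ v) = (u * a) ⊗ₜ v - u ⊗ₜ (a * v) := by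
  simp [tensorCommutator]

lemma tensorCommutator_mul_left (a u : A) (t : A ⊗[F] A) :
    tensorCommutator F a ((u ⊗ₜ 1) * t) = (u ⊗ₜ 1) * tensorCommutator F a t := by
  induction t using TensorProduct.induction_on with
  | zero => simp
  | tmul v w => simp [mul_sub, mul_assoc]
  | add s t hs ht => simp only [mul_add, map_add, hs, ht]

lemma tensorCommutator_mul_right (a u : A) (t : A ⊗[F] A) :
    tensorCommutator F a (t * (1 ⊗ₜ u)) = tensorCommutator F a t * (1 ⊗ₜ u) := by
  induction t using TensorProduct.induction_on with
  | zero => simp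
  | tmul v w => simp [sub_mul, mul_assoc]
  | add s t hs ht => simp only [add_mul, map_add, hs, ht]

lemma mul'_tensorCommutator (a : A) (t : A ⊗[F] A) : mul' F A (tensorCommutator F a t) = 0 := by
  have h : mul' F A ∘ₗ tensorCommutator F a = 0 :=
    TensorProduct.ext' fun u v => by simp [mul_assoc]
  exact DFunLike.congr_fun h t

lemma tensorCommutator_mem_range_rTensor {I : Submodule F A} {a : A} (hI : ∀ u ∈ I, u * a ∈ I)
    {t : A ⊗[F] A} (ht : t ∈ range (I.subtype.rTensor A)) :
    tensorCommutator F a t ∈ range (I.subtype.rTensor A) := by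
  obtain ⟨t, rfl⟩ := ht
  induction t using TensorProduct.induction_on with
  | zero => simp
  | tmul u v =>
    simp only [rTensor_tmul, Submodule.subtype_apply, tensorCommutator_tmul]
    exact sub_mem ⟨(⟨u * a, hI u u.2⟩ : I) ⊗ₜ v, rfl⟩ ⟨u ⊗ₜ (a * v), rfl⟩
  | add s t hs ht => simpa only [map_add] using add_mem hs ht

lemma tensorCommutator_mem_range_lTensor {J : Submodule F A} {a : A} (hJ : ∀ u ∈ J, a * u ∈ J)
    {t : A ⊗[F] A} (ht : t ∈ range (J.subtype.lTensor A)) :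
    tensorCommutator F a t ∈ range (J.subtype.lTensor A) := by
  obtain ⟨t, rfl⟩ := ht
  induction t using TensorProduct.induction_on with
  | zero => simp
  | tmul u v =>
    simp only [lTensor_tmul, Submodule.subtype_apply, tensorCommutator_tmul]
    exact sub_mem ⟨(u * a) ⊗ₜ v, rfl⟩ ⟨u ⊗ₜ (⟨a * v, hJ v v.2⟩ : J), rfl⟩
  | add s t hs ht => simpa only [map_add] using add_mem hs ht

end TensorCommutator

section FreeDerivation

open scoped TensorProduct
open Filter

variable {F X : Type*} [CommRing F]

/-- The algebra map `f ↦ !![α f, ∂ f; 0, β f]` encoding the derivation `∂` along `α` and `β`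
with values `∂ x = d x` on the variables. -/
noncomputable def freeDerivationHom {R : Type*} [Ring R] [Algebra F R]
    (α β : FreeAlgebra F X →ₐ[F] R) (d : X → R) : FreeAlgebra F X →ₐ[F] Matrix (Fin 2) (Fin 2) R :=
  FreeAlgebra.lift F fun x => !![α (FreeAlgebra.ι F x), d x; 0, β (FreeAlgebra.ι F x)]

lemma freeDerivationHom_eq {R : Type*} [Ring R] [Algebra F R] (α β : FreeAlgebra F X →ₐ[F] R)
    (d : X → R) (f : FreeAlgebra F X) :
    freeDerivationHom α β d f = !![α f, freeDerivationHom α β d f 0 1; 0, β f] := by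
  induction f using FreeAlgebra.induction with
  | grade0 r =>
    ext i j
    fin_cases i <;> fin_cases j <;> simp [Matrix.algebraMap_matrix_apply]
  | grade1 x => simp [freeDerivationHom]
  | mul f g hf hg =>
    rw [map_mul, hf, hg]
    simp
  | add f g hf hg =>
    rw [map_add, hf, hg]
    simp

variable [DecidableEq X]

/-- The free partial derivative `∂ₓ`, with values in the tensor square of the free algebra:
`∂ₓ (u x v)` contributes `u ⊗ v` for each occurrence of the variable `x`. -/
noncomputable def freePartial (F : Type*) [CommRing F] {X : Type*} [DecidableEq X] (x : X) :
    FreeAlgebra F X →ₗ[F] FreeAlgebra F X ⊗[F] FreeAlgebra F X :=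
  Matrix.entryLinearMap F (FreeAlgebra F X ⊗[F] FreeAlgebra F X) 0 1 ∘ₗ
    (freeDerivationHom Algebra.TensorProduct.includeLeft Algebra.TensorProduct.includeRight
      (Pi.single x 1)).toLinearMap

@[simp]
lemma freePartial_algebraMap (x : X) (r : F) : freePartial F x (algebraMap F _ r) = 0 := by
  simp [freePartial, Matrix.algebraMap_matrix_apply]

@[simp]
lemma freePartial_ι (x y : X) :
    freePartial F x (FreeAlgebra.ι F y) = (Pi.single x 1 : X → _) y := by
  simp [freePartial, freeDerivationHom]

lemma freePartial_mul (x : X) (f g : FreeAlgebra F X) : freePartial F x (f * g) =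
    (f ⊗ₜ 1) * freePartial F x g + freePartial F x f * (1 ⊗ₜ g) := by
  simp only [freePartial, LinearMap.comp_apply, AlgHom.toLinearMap_apply, map_mul]
  rw [freeDerivationHom_eq _ _ _ f, freeDerivationHom_eq _ _ _ g]
  simp [Matrix.entryLinearMap_apply]

/-- The fundamental formula of the free differential calculus; only the variables that occur in
`f` contribute. -/
lemma eventually_sum_tensorCommutator_freePartial (f : FreeAlgebra F X) :
    ∀ᶠ s : Finset X in atTop,
      ∑ x ∈ s, tensorCommutator F (FreeAlgebra.ι F x) (freePartial F x f) =
        f ⊗ₜ[F] (1 : FreeAlgebra F X) - (1 : FreeAlgebra F X) ⊗ₜ[F] f := by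
  induction f using FreeAlgebra.induction with
  | grade0 r =>
    refine .of_forall fun s => ?_
    simp only [freePartial_algebraMap, map_zero, Finset.sum_const_zero]
    simp [Algebra.algebraMap_eq_smul_one, TensorProduct.smul_tmul]
  | grade1 y =>
    filter_upwards [eventually_ge_atTop {y}] with s hs
    rw [Finset.sum_eq_single_of_mem y (hs (by simp)) fun x _ hx => by simp [hx.symm]]
    simp [Algebra.TensorProduct.one_def]
  | mul f g hf hg =>
    filter_upwards [hf, hg] with s hf hg
    simp only [freePartial_mul, map_add, tensorCommutator_mul_left, tensorCommutator_mul_right,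
      Finset.sum_add_distrib, ← Finset.mul_sum, ← Finset.sum_mul, hf, hg]
    simp [mul_sub, sub_mul]
  | add f g hf hg =>
    filter_upwards [hf, hg] with s hf hg
    simp only [map_add, Finset.sum_add_distrib, hf, hg, TensorProduct.add_tmul,
      TensorProduct.tmul_add]
    abel

end FreeDerivation

section Lewin

open scoped TensorProduct
open LinearMap

/-- Modulo `I ⊗ R + R ⊗ J`, every term of the fundamental formula for `f ⊗ 1 - 1 ⊗ f` vanishes.
Splitting the formula accordingly exhibits an element of `(I ⊗ R) ∩ (R ⊗ J) = I ⊗ J` that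
multiplies out to `f`. -/
theorem mem_mul_of_freePartial_eq_zero {F X : Type*} [Field F] [DecidableEq X]
    {I J : Submodule F (FreeAlgebra F X)} (hI : ∀ u ∈ I, ∀ x, u * FreeAlgebra.ι F x ∈ I)
    (hJ : ∀ u ∈ J, ∀ x, FreeAlgebra.ι F x * u ∈ J) {f : FreeAlgebra F X} (hfI : f ∈ I)
    (hfJ : f ∈ J) (hf : ∀ x, TensorProduct.map I.mkQ J.mkQ (freePartial F x f) = 0) :
    f ∈ I * J := by
  have hsplit (x : X) : ∃ a ∈ range (I.subtype.rTensor (FreeAlgebra F X)),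
      ∃ b ∈ range (J.subtype.lTensor (FreeAlgebra F X)), a + b = freePartial F x f := by
    have hker := TensorProduct.map_ker (exact_subtype_mkQ I) I.mkQ_surjective
      (exact_subtype_mkQ J) J.mkQ_surjective
    rw [sup_comm] at hker
    exact Submodule.mem_sup.mp (hker.le (hf x))
  choose a haI b hbJ hab using hsplit
  obtain ⟨s, hs⟩ := (eventually_sum_tensorCommutator_freePartial f).exists
  simp only [← hab, map_add, Finset.sum_add_distrib] at hs
  set a' := ∑ x ∈ s, tensorCommutator F (FreeAlgebra.ι F x) (a x)
  set b' := ∑ x ∈ s, tensorCommutator F (FreeAlgebra.ι F x) (b x)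
  have haI' : f ⊗ₜ[F] (1 : FreeAlgebra F X) - a' ∈ range (I.subtype.rTensor (FreeAlgebra F X)) :=
    sub_mem ⟨(⟨f, hfI⟩ : I) ⊗ₜ 1, rfl⟩ <| sum_mem fun x _ =>
      tensorCommutator_mem_range_rTensor (fun u hu => hI u hu x) (haI x)
  have hbJ' : (1 : FreeAlgebra F X) ⊗ₜ[F] f + b' ∈ range (J.subtype.lTensor (FreeAlgebra F X)) :=
    add_mem ⟨1 ⊗ₜ (⟨f, hfJ⟩ : J), rfl⟩ <| sum_mem fun x _ =>
      tensorCommutator_mem_range_lTensor (fun u hu => hJ u hu x) (hbJ x)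
  have heq : f ⊗ₜ[F] (1 : FreeAlgebra F X) - a' = (1 : FreeAlgebra F X) ⊗ₜ[F] f + b' := by
    rw [sub_eq_iff_eq_add, add_right_comm, add_assoc, hs]
    abel
  obtain ⟨w, hw⟩ := mem_range_map_subtype haI' (heq ▸ hbJ')
  have hmul : mul' F (FreeAlgebra F X) (f ⊗ₜ[F] (1 : FreeAlgebra F X) - a') = f := by
    simp [a', mul'_tensorCommutator]
  rw [← hmul, ← hw]
  clear hw
  induction w using TensorProduct.induction_on with
  | zero => simp
  | tmul u v => simpa using Submodule.mul_mem_mul u.2 v.2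
  | add u v hu hv => simpa only [map_add] using add_mem hu hv

variable {F A X ι κ : Type*} [CommRing F] [Fintype ι] [DecidableEq ι] [Fintype κ] [DecidableEq κ]

/-- The ideal of polynomial identities of `A` in the variables `X`, as a submodule. -/
def polyIdentities (F X A : Type*) [CommRing F] [Ring A] [Algebra F A] :
    Submodule F (FreeAlgebra F X) where
  carrier := {f | IsPolyIdentity A f}
  add_mem' hf hg φ := by simp [hf φ, hg φ]
  zero_mem' φ := map_zero φ
  smul_mem' c f hf φ := by simp [hf φ]

/-- The map `u ⊗ v ↦ φ u * E * ψ v`. -/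
noncomputable def sandwich [Ring A] [Algebra F A] (φ : A →ₐ[F] Matrix ι ι F)
    (ψ : A →ₐ[F] Matrix κ κ F) (E : Matrix ι κ F) : A ⊗[F] A →ₗ[F] Matrix ι κ F :=
  TensorProduct.lift (LinearMap.mk₂ F (fun u v => φ u * E * ψ v)
    (by intros; simp [Matrix.add_mul]) (by intros; simp)
    (by intros; simp [Matrix.mul_add]) (by intros; simp))

section Sandwich

variable [Ring A] [Algebra F A] (φ : A →ₐ[F] Matrix ι ι F) (ψ : A →ₐ[F] Matrix κ κ F)
  (E : Matrix ι κ F)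

@[simp]
lemma sandwich_tmul (u v : A) : sandwich φ ψ E (u ⊗ₜ v) = φ u * E * ψ v := rfl

lemma sandwich_mul_left (u : A) (t : A ⊗[F] A) :
    sandwich φ ψ E ((u ⊗ₜ 1) * t) = φ u * sandwich φ ψ E t := by
  induction t using TensorProduct.induction_on with
  | zero => simp
  | tmul v w => simp [Matrix.mul_assoc]
  | add s t hs ht => simp only [mul_add, map_add, hs, ht, Matrix.mul_add]

lemma sandwich_mul_right (t : A ⊗[F] A) (u : A) :
    sandwich φ ψ E (t * (1 ⊗ₜ u)) = sandwich φ ψ E t * ψ u := by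
  induction t using TensorProduct.induction_on with
  | zero => simp
  | tmul v w => simp [Matrix.mul_assoc]
  | add s t hs ht => simp only [add_mul, map_add, hs, ht, Matrix.add_mul]

lemma sandwich_single_apply (i : ι) (j : ι) (k l : κ) (t : A ⊗[F] A) :
    sandwich φ ψ (Matrix.single j k 1) t i l = TensorProduct.lid F F (TensorProduct.map
      (Matrix.entryLinearMap F F i j ∘ₗ φ.toLinearMap)
      (Matrix.entryLinearMap F F k l ∘ₗ ψ.toLinearMap) t) := by
  induction t using TensorProduct.induction_on with
  | zero => simp
  | tmul u v => simp [Matrix.mul_apply, Matrix.single_apply, ite_and]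
  | add s t hs ht => simp only [map_add, Matrix.add_apply, hs, ht]

end Sandwich

/-- The block upper triangular representation of the free algebra with diagonal blocks `φ` and
`ψ` and upper right block `d y` at the variable `y`. -/
noncomputable def blockHom (φ : FreeAlgebra F X →ₐ[F] Matrix ι ι F)
    (ψ : FreeAlgebra F X →ₐ[F] Matrix κ κ F) (d : X → Matrix ι κ F) :
    FreeAlgebra F X →ₐ[F] Matrix (ι ⊕ κ) (ι ⊕ κ) F :=
  FreeAlgebra.lift F fun y =>
    Matrix.fromBlocks (φ (FreeAlgebra.ι F y)) (d y) 0 (ψ (FreeAlgebra.ι F y))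

section BlockHom

variable (φ : FreeAlgebra F X →ₐ[F] Matrix ι ι F) (ψ : FreeAlgebra F X →ₐ[F] Matrix κ κ F)

lemma blockHom_eq (d : X → Matrix ι κ F) (f : FreeAlgebra F X) :
    blockHom φ ψ d f = Matrix.fromBlocks (φ f) (blockHom φ ψ d f).toBlocks₁₂ 0 (ψ f) := by
  induction f using FreeAlgebra.induction with
  | grade0 r =>
    ext (i | i) (j | j) <;> simp [Matrix.algebraMap_matrix_apply, Matrix.toBlocks₁₂]
  | grade1 y => simp [blockHom]
  | mul f g hf hg =>
    rw [map_mul, hf, hg]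
    simp [Matrix.fromBlocks_multiply]
  | add f g hf hg =>
    rw [map_add, hf, hg]
    simp [Matrix.fromBlocks_add]

lemma toBlocks₁₂_blockHom_single [DecidableEq X] (E : Matrix ι κ F) (x : X)
    (f : FreeAlgebra F X) :
    (blockHom φ ψ (Pi.single x E) f).toBlocks₁₂ = sandwich φ ψ E (freePartial F x f) := by
  induction f using FreeAlgebra.induction with
  | grade0 r =>
    ext i j
    simp [Matrix.algebraMap_matrix_apply, Matrix.toBlocks₁₂]
  | grade1 y =>
    obtain rfl | hyx := eq_or_ne y x
    · simp [blockHom, Algebra.TensorProduct.one_def]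
    · simp [blockHom, hyx]
  | mul f g hf hg =>
    rw [map_mul, blockHom_eq φ ψ _ f, blockHom_eq φ ψ _ g, freePartial_mul, hf, hg]
    simp [Matrix.fromBlocks_multiply, sandwich_mul_left, sandwich_mul_right]
  | add f g hf hg =>
    rw [map_add, blockHom_eq φ ψ _ f, blockHom_eq φ ψ _ g, hf, hg]
    simp [Matrix.fromBlocks_add]

end BlockHom

lemma mem_polyIdentities_matrix {f : FreeAlgebra F X} : f ∈ polyIdentities F X (Matrix ι ι F) ↔
    ∀ a : (FreeAlgebra F X →ₐ[F] Matrix ι ι F) × ι × ι,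
      (Matrix.entryLinearMap F F a.2.1 a.2.2 ∘ₗ a.1.toLinearMap) f = 0 :=
  ⟨fun hf a => by simp [hf a.1], fun hf φ => Matrix.ext fun i j => hf (φ, i, j)⟩

/-- Lewin's theorem for block triangular matrices. -/
theorem polyIdentities_matrix_sum_le_mul (F X ι κ : Type*) [Field F] [Fintype ι] [DecidableEq ι]
    [Fintype κ] [DecidableEq κ] :
    polyIdentities F X (Matrix (ι ⊕ κ) (ι ⊕ κ) F) ≤
      polyIdentities F X (Matrix ι ι F) * polyIdentities F X (Matrix κ κ F) := by
  classical
  intro f hf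
  have hblock (φ : FreeAlgebra F X →ₐ[F] Matrix ι ι F) (ψ : FreeAlgebra F X →ₐ[F] Matrix κ κ F)
      (d : X → Matrix ι κ F) : φ f = 0 ∧ (blockHom φ ψ d f).toBlocks₁₂ = 0 ∧ ψ f = 0 := by
    have h := (blockHom_eq φ ψ d f).symm.trans (hf _)
    rw [← Matrix.fromBlocks_zero, Matrix.fromBlocks_inj] at h
    exact ⟨h.1, h.2.1, h.2.2.2⟩
  refine mem_mul_of_freePartial_eq_zero (fun u hu x φ => by simp [hu φ])
    (fun u hu x φ => by simp [hu φ]) (fun φ => (hblock φ (FreeAlgebra.lift F 0) 0).1)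
    (fun ψ => (hblock (FreeAlgebra.lift F 0) ψ 0).2.2) fun x =>
    map_mkQ_eq_zero_of_map_eq_zero (fun _ => mem_polyIdentities_matrix)
      (fun _ => mem_polyIdentities_matrix) ?_
  rintro ⟨φ, i, j⟩ ⟨ψ, k, l⟩
  apply (TensorProduct.lid F F).injective
  rw [← sandwich_single_apply, ← toBlocks₁₂_blockHom_single, (hblock φ ψ _).2.1, map_zero]
  rfl

end Lewin

section PowDerivative

open Polynomial

variable {F R : Type*} [Field F] [Ring R] [Algebra F R]

lemma coeff_mem_of_forall_eval_mem [Infinite F] {W : Submodule F R} {p : R[X]}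
    (hp : ∀ t : F, p.eval (algebraMap F R t) ∈ W) (k : ℕ) : p.coeff k ∈ W := by
  by_contra hk
  obtain ⟨l, hl, hW⟩ := Submodule.exists_le_ker_of_notMem hk
  let q : F[X] := p.sum fun i a => monomial i (l a)
  have hq : q = 0 := by
    refine Polynomial.funext fun t => ?_
    have hlp : l (p.eval (algebraMap F R t)) = 0 := hW (hp t)
    rw [eval_eq_sum, Polynomial.sum, map_sum] at hlp
    simp only [q, Polynomial.sum, eval_finsetSum, eval_monomial, eval_zero]
    rw [← hlp]
    refine Finset.sum_congr rfl fun i _ => ?_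
    rw [← map_pow, ← Algebra.commutes, ← Algebra.smul_def, map_smul, smul_eq_mul, mul_comm]
  have hqk : q.coeff k = l (p.coeff k) := by
    simp +contextual [q, Polynomial.sum, finsetSum_coeff, coeff_monomial]
  exact hl (by rw [← hqk, hq, coeff_zero])

/-- The sum of `x ^ i * y * x ^ (n - i)` over `i ≤ n`, which is the part linear in `y` of
`(x + y) ^ (n + 1)`. -/
def powDerivative (n : ℕ) (x y : R) : R := ∑ i ∈ Finset.range (n + 1), x ^ i * y * x ^ (n - i)

lemma powDerivative_succ (n : ℕ) (x y : R) :
    powDerivative (n + 1) x y = powDerivative n x y * x + x ^ (n + 1) * y := by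
  rw [powDerivative, Finset.sum_range_succ, powDerivative, Finset.sum_mul]
  congr 1
  · refine Finset.sum_congr rfl fun i hi => ?_
    rw [Nat.succ_sub (Finset.mem_range_succ_iff.mp hi), pow_succ, mul_assoc _ _ x]
  · simp

lemma powDerivative_pow_self (n : ℕ) (x : R) : powDerivative n x 1 = (n + 1) • x ^ n := by
  rw [powDerivative, Finset.sum_congr rfl fun i hi => ?_, Finset.sum_const, Finset.card_range]
  rw [mul_one, ← pow_add, Nat.add_sub_cancel' (Finset.mem_range_succ_iff.mp hi)]

lemma coeff_zero_linear_pow (n : ℕ) (x y : R) : ((C x + C y * X) ^ n).coeff 0 = x ^ n := by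
  induction n with
  | zero => simp
  | succ n ih => rw [pow_succ, mul_coeff_zero, ih, pow_succ]; simp

lemma coeff_one_linear_pow_succ (n : ℕ) (x y : R) :
    ((C x + C y * X) ^ (n + 1)).coeff 1 = powDerivative n x y := by
  induction n with
  | zero => simp [powDerivative]
  | succ n ih =>
    rw [pow_succ, mul_coeff_one, ih, powDerivative_succ, coeff_zero_linear_pow, add_comm]
    simp

lemma powDerivative_mem [Infinite F] {S J : Submodule F R} {n : ℕ}
    (hpow : ∀ x ∈ S, x ^ (n + 1) ∈ J) {x y : R} (hx : x ∈ S) (hy : y ∈ S) :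
    powDerivative n x y ∈ J := by
  rw [← coeff_one_linear_pow_succ n x y]
  refine coeff_mem_of_forall_eval_mem (fun t => ?_) 1
  let eval_t : R[X] →+* R := eval₂RingHom' (RingHom.id R) (algebraMap F R t)
    fun a => (Algebra.commutes t a).symm
  have heval : eval_t ((C x + C y * X) ^ (n + 1)) = (x + t • y) ^ (n + 1) := by
    have hC (a : R) : eval_t (C a) = a := eval_C
    have hX : eval_t X = algebraMap F R t := eval_X
    rw [map_pow, map_add, map_mul, hC, hC, hX, Algebra.smul_def, Algebra.commutes]
  change eval_t _ ∈ J
  rw [heval]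
  exact hpow _ (S.add_mem hx (S.smul_mem t hy))

end PowDerivative

section NagataHigman

variable {R : Type*} [Ring R]

lemma mul_mul_mem_of_mem_span {T : Set R} {S J : TwoSidedIdeal R}
    (h : ∀ t ∈ T, ∀ s ∈ S, ∀ u ∈ T, t * s * u ∈ J) {t s u : R} (ht : t ∈ TwoSidedIdeal.span T)
    (hs : s ∈ S) (hu : u ∈ TwoSidedIdeal.span T) : t * s * u ∈ J := by
  have hgen {t s : R} (ht : t ∈ T) (hs : s ∈ S) : t * s * u ∈ J := by
    induction hu using TwoSidedIdeal.span_induction generalizing s with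
    | mem u hu => exact h t ht s hs u hu
    | zero => simp
    | add u v _ _ hu hv => rw [mul_add]; exact J.add_mem (hu hs) (hv hs)
    | neg u _ hu => rw [mul_neg]; exact J.neg_mem (hu hs)
    | left_absorb a u _ hu =>
      rw [← mul_assoc, mul_assoc t]
      exact hu (S.mul_mem_right _ _ hs)
    | right_absorb b u _ hu => rw [← mul_assoc]; exact J.mul_mem_right _ _ (hu hs)
  induction ht using TwoSidedIdeal.span_induction generalizing s with
  | mem t ht => exact hgen ht hs
  | zero => simp
  | add t v _ _ ht hv => rw [add_mul, add_mul]; exact J.add_mem (ht hs) (hv hs)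
  | neg t _ ht => rw [neg_mul, neg_mul]; exact J.neg_mem (ht hs)
  | left_absorb a t _ ht =>
    rw [mul_assoc, mul_assoc, ← mul_assoc t]
    exact J.mul_mem_left _ _ (ht hs)
  | right_absorb b t _ ht => rw [mul_assoc t]; exact ht (S.mul_mem_left _ _ hs)

lemma prod_mem_of_prod_mem_sup {S J T : TwoSidedIdeal R}
    (hT : ∀ t ∈ T, ∀ s ∈ S, ∀ u ∈ T, t * s * u ∈ J) {N : ℕ}
    (hN : ∀ l : List R, N ≤ l.length → (∀ s ∈ l, s ∈ S) → l.prod ∈ J ⊔ T) {l : List R}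
    (hl : 2 * N + 1 ≤ l.length) (hlS : ∀ s ∈ l, s ∈ S) : l.prod ∈ J := by
  obtain ⟨l₁, s, l₂, rfl, hl₁, hl₂⟩ :
      ∃ l₁ s l₂, l = l₁ ++ s :: l₂ ∧ N ≤ l₁.length ∧ N ≤ l₂.length := by
    obtain ⟨s, l₂, hdrop⟩ : ∃ s l₂, l.drop N = s :: l₂ :=
      List.exists_cons_of_length_pos (by simp; lia)
    have hlen := congrArg List.length hdrop
    simp only [List.length_drop, List.length_cons] at hlen
    exact ⟨l.take N, s, l₂, by rw [← hdrop, List.take_append_drop], by simp; lia, by lia⟩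
  obtain ⟨hlS₁, hs, hlS₂⟩ : (∀ u ∈ l₁, u ∈ S) ∧ s ∈ S ∧ ∀ u ∈ l₂, u ∈ S := by
    simpa [or_imp, forall_and] using hlS
  obtain ⟨j, hj, t, ht, hjt⟩ := TwoSidedIdeal.mem_sup.mp (hN l₁ hl₁ hlS₁)
  obtain ⟨j', hj', t', ht', hjt'⟩ := TwoSidedIdeal.mem_sup.mp (hN l₂ hl₂ hlS₂)
  have hprod : (l₁ ++ s :: l₂).prod = j * (s * (j' + t')) + (t * s * j' + t * s * t') := by
    rw [List.prod_append, List.prod_cons, ← hjt, ← hjt']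
    noncomm_ring
  rw [hprod]
  exact J.add_mem (J.mul_mem_right _ _ hj)
    (J.add_mem (J.mul_mem_left _ _ hj') (hT t ht s hs t' ht'))

lemma pow_mul_mul_pow_mem (F : Type*) [Field F] [CharZero F] [Algebra F R]
    {S J : TwoSidedIdeal R} {n : ℕ} (hpow : ∀ x ∈ S, x ^ (n + 1) ∈ J)
    {x y z : R} (hx : x ∈ S) (hy : y ∈ S) (hz : z ∈ S) : x ^ n * z * y ^ n ∈ J := by
  have hderiv {x y : R} (hx : x ∈ S) (hy : y ∈ S) : powDerivative n x y ∈ J :=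
    powDerivative_mem (F := F) (S := S.asIdeal.restrictScalars F)
      (J := J.asIdeal.restrictScalars F) hpow hx hy
  have hswap : ∑ j ∈ Finset.range (n + 1), powDerivative n x (z * y ^ j) * y ^ (n - j) =
      ∑ i ∈ Finset.range (n + 1), x ^ i * z * powDerivative n y (x ^ (n - i)) := by
    simp only [powDerivative, Finset.sum_mul, Finset.mul_sum]
    rw [Finset.sum_comm]
    simp only [mul_assoc]
  have hsum : ∑ i ∈ Finset.range (n + 1), x ^ i * z * powDerivative n y (x ^ (n - i)) ∈ J :=
    hswap ▸ J.finsetSum_mem _ _ fun j _ =>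
      J.mul_mem_right _ _ (hderiv hx (S.mul_mem_right _ _ hz))
  have hlower : ∑ i ∈ Finset.range n, x ^ i * z * powDerivative n y (x ^ (n - i)) ∈ J := by
    refine J.finsetSum_mem _ _ fun i hi => J.mul_mem_left _ _ (hderiv hy ?_)
    obtain ⟨k, hk⟩ := Nat.exists_eq_succ_of_ne_zero (Nat.sub_pos_of_lt (Finset.mem_range.mp hi)).ne'
    rw [hk, pow_succ]
    exact S.mul_mem_left _ _ hx
  have htop : (n + 1) • (x ^ n * z * y ^ n) ∈ J := by
    rw [Finset.sum_range_succ, Nat.sub_self, pow_zero, powDerivative_pow_self, mul_smul_comm]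
      at hsum
    exact (add_mem_cancel_left hlower).mp hsum
  have hne : ((n + 1 : ℕ) : F) ≠ 0 := Nat.cast_ne_zero.mpr n.succ_ne_zero
  rw [← Nat.cast_smul_eq_nsmul F] at htop
  exact ((J.asIdeal.restrictScalars F).smul_mem_iff hne).mp htop

/-- The **Nagata–Higman theorem**, relative to an ideal `J`. -/
theorem exists_prod_mem_of_pow_mem (F : Type*) [Field F] [CharZero F] [Algebra F R]
    {S : TwoSidedIdeal R} (n : ℕ) {J : TwoSidedIdeal R} (hpow : ∀ x ∈ S, x ^ n ∈ J) :
    ∃ N : ℕ, ∀ l : List R, N ≤ l.length → (∀ s ∈ l, s ∈ S) → l.prod ∈ J := by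
  induction n generalizing J with
  | zero =>
    have hone : (1 : R) ∈ J := by simpa using hpow 0 S.zero_mem
    exact ⟨0, fun l _ _ => by simpa using J.mul_mem_left l.prod 1 hone⟩
  | succ n ih =>
    let T : TwoSidedIdeal R := TwoSidedIdeal.span ((· ^ n) '' {x | x ∈ S})
    have hT : ∀ t ∈ T, ∀ s ∈ S, ∀ u ∈ T, t * s * u ∈ J := by
      refine fun t ht s hs u hu => mul_mul_mem_of_mem_span ?_ ht hs hu
      rintro _ ⟨x, hx, rfl⟩ s hs _ ⟨y, hy, rfl⟩
      exact pow_mul_mul_pow_mem F hpow hx hy hs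
    obtain ⟨N, hN⟩ := ih (J := J ⊔ T) fun x hx =>
      TwoSidedIdeal.mem_sup_right (TwoSidedIdeal.subset_span ⟨x, hx, rfl⟩)
    exact ⟨2 * N + 1, fun l hl hlS => prod_mem_of_prod_mem_sup hT hN hl hlS⟩

end NagataHigman

section PermutationIdentity

open Finset

lemma sum_neg_one_pow_card_superset {R ι : Type*} [CommRing R] [Fintype ι] [DecidableEq ι]
    {T : Finset ι} (hT : T ≠ univ) : ∑ S with T ⊆ S, (-1 : R) ^ #S = 0 := by
  obtain ⟨i, hi⟩ : ∃ i, i ∉ T := by simpa [eq_univ_iff_forall] using hT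
  have hprod := prod_add (fun _ => (-1 : R)) (fun j => if j ∈ T then 0 else 1) univ
  rw [prod_eq_zero (mem_univ i) (by simp [hi]), powerset_univ] at hprod
  rw [sum_filter]
  refine (sum_congr rfl fun S _ => ?_).trans hprod.symm
  rw [prod_const]
  split_ifs with hS
  · rw [prod_eq_one, mul_one]
    intro j hj
    exact if_neg fun hjT => (mem_sdiff.mp hj).2 (hS hjT)
  · obtain ⟨j, hjT, hjS⟩ := not_subset.mp hS
    have hj : j ∈ univ \ S := mem_sdiff.mpr ⟨mem_univ j, hjS⟩
    have hzero : (if j ∈ T then (0 : R) else 1) = 0 := if_pos hjT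
    exact (mul_eq_zero_of_right _ (prod_eq_zero hj hzero)).symm

lemma sum_neg_one_pow_card_smul_map_sum {R M N κ ι : Type*} [CommRing R] [AddCommGroup M]
    [Module R M] [AddCommGroup N] [Module R N] [Fintype κ] [DecidableEq κ] [Fintype ι]
    [DecidableEq ι]
    (f : MultilinearMap R (fun _ : κ => M) N) (y : κ → ι → M) :
    ∑ S : Finset ι, (-1 : R) ^ #S • f (fun p => ∑ i ∈ S, y p i) =
      (-1 : R) ^ Fintype.card ι •
        ∑ h : κ → ι with h.Surjective, f fun p => y p (h p) := by
  have hexpand (S : Finset ι) : f (fun p => ∑ i ∈ S, y p i) =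
      ∑ h : κ → ι, if univ.image h ⊆ S then f (fun p => y p (h p)) else 0 := by
    rw [f.map_sum_finset, ← sum_filter]
    congr 1
    ext h
    simp [Fintype.mem_piFinset, image_subset_iff]
  simp only [hexpand, smul_sum, smul_ite, smul_zero]
  rw [sum_comm, sum_filter]
  refine sum_congr rfl fun h _ => ?_
  rw [← sum_filter, ← sum_smul]
  split_ifs with hh
  · simp [image_univ_of_surjective hh, univ_subset_iff, filter_eq']
  · rw [sum_neg_one_pow_card_superset, zero_smul]
    exact fun himage => hh fun i => by simpa using himage.ge (mem_univ i)

variable {F A : Type*} [Field F] [Ring A] [Algebra F A]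

lemma sum_neg_one_pow_card_smul_prod_map {X : Type*} [DecidableEq X] {k : ℕ} (u : Fin k → X)
    (z : Fin k → A) (w : List X) (hw : w.length ≤ k) :
    ∑ S : Finset (Fin k), (-1 : F) ^ #S • (w.map fun x => ∑ i ∈ S with u i = x, z i).prod =
      (-1 : F) ^ k • ∑ g : Equiv.Perm (Fin k),
        if List.ofFn (u ∘ g) = w then (List.ofFn (z ∘ g)).prod else 0 := by
  obtain ⟨m, v, rfl⟩ : ∃ m, ∃ v : Fin m → X, w = List.ofFn v :=
    ⟨w.length, w.get, (List.ofFn_get w).symm⟩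
  have hprod (h : Fin m → Fin k) :
      (List.ofFn fun p => if u (h p) = v p then z (h p) else 0).prod =
        if List.ofFn (u ∘ h) = List.ofFn v then (List.ofFn (z ∘ h)).prod else 0 := by
    split_ifs with huv
    · have huv (p) : u (h p) = v p := congrFun (List.ofFn_injective huv) p
      simp [huv, Function.comp_def]
    · obtain ⟨p, hp⟩ : ∃ p, u (h p) ≠ v p := by
        by_contra! hall
        exact huv (congrArg List.ofFn (funext hall))
      exact List.prod_eq_zero (List.mem_ofFn.mpr ⟨p, if_neg hp⟩)
  have hexpand := sum_neg_one_pow_card_smul_map_sum (MultilinearMap.mkPiAlgebraFin F m A)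
    fun p i => if u i = v p then z i else 0
  simp only [MultilinearMap.mkPiAlgebraFin_apply, ← sum_filter, Fintype.card_fin] at hexpand
  simp only [List.map_ofFn, Function.comp_def] at hexpand hprod ⊢
  rw [hexpand]
  simp only [hprod]
  congr 1
  obtain rfl | hmk := (show m ≤ k by simpa using hw).eq_or_lt
  · refine sum_bij' (fun h hh => Equiv.ofBijective h
      (Finite.surjective_iff_bijective.mp (mem_filter.mp hh).2)) (fun g _ => g) ?_ ?_ ?_ ?_ ?_
    · exact fun _ _ => mem_univ _
    · exact fun g _ => mem_filter.mpr ⟨mem_univ _, g.surjective⟩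
    · exact fun _ _ => rfl
    · exact fun _ _ => Equiv.ext fun _ => rfl
    · exact fun _ _ => rfl
  · have hno_surj (h : Fin m → Fin k) : ¬ h.Surjective := fun hh =>
      hmk.not_ge (by simpa using Fintype.card_le_of_surjective _ hh)
    have hno_word (g : Equiv.Perm (Fin k)) : List.ofFn (fun i => u (g i)) ≠ List.ofFn v :=
      fun hg => hmk.ne' (by simpa using congrArg List.length hg)
    simp [hno_surj, hno_word]

lemma basisFreeMonoid_apply (F : Type*) [Field F] {X : Type*} (w : FreeMonoid X) :
    FreeAlgebra.basisFreeMonoid F X w = FreeMonoid.lift (FreeAlgebra.ι F) w := by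
  simp [FreeAlgebra.basisFreeMonoid, FreeAlgebra.equivMonoidAlgebraFreeMonoid]

lemma lift_eq_sum_basisFreeMonoid_repr {X : Type*} (f : FreeAlgebra F X) (x : X → A) :
    FreeAlgebra.lift F x f = ((FreeAlgebra.basisFreeMonoid F X).repr f).sum
      fun w c => c • (w.toList.map x).prod := by
  conv_lhs => rw [← (FreeAlgebra.basisFreeMonoid F X).linearCombination_repr f]
  rw [Finsupp.linearCombination_apply, map_finsuppSum]
  refine Finsupp.sum_congr fun w _ => ?_
  rw [map_smul, basisFreeMonoid_apply, FreeMonoid.lift_apply, map_list_prod, List.map_map]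
  congr 3
  ext
  simp

/-- Substituting signed subset sums of new variables into the identity kills all monomials but
those of maximal length, each of which gets multilinearized. -/
theorem exists_permutation_identity {X : Type*} {f : FreeAlgebra F X} (hf : f ≠ 0)
    (hA : IsPolyIdentity A f) :
    ∃ (k : ℕ) (β : Equiv.Perm (Fin k) → F), β 1 ≠ 0 ∧
      ∀ z : Fin k → A, ∑ g, β g • (List.ofFn (z ∘ g)).prod = 0 := by
  classical
  let b := FreeAlgebra.basisFreeMonoid F X
  obtain ⟨w₀, hw₀, hmax⟩ := (b.repr f).support.exists_max_image FreeMonoid.length (by simpa)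
  obtain ⟨k, u, rfl⟩ : ∃ k, ∃ u : Fin k → X, w₀ = FreeMonoid.ofList (List.ofFn u) :=
    ⟨w₀.toList.length, w₀.toList.get, by simp⟩
  refine ⟨k, fun g => b.repr f (FreeMonoid.ofList (List.ofFn (u ∘ g))), by simpa using hw₀,
    fun z => ?_⟩
  have hzero : ∑ w ∈ (b.repr f).support, b.repr f w • ∑ S : Finset (Fin k), (-1 : F) ^ #S •
      (w.toList.map fun x => ∑ i ∈ S with u i = x, z i).prod = 0 := by
    simp only [smul_sum]
    rw [sum_comm]
    refine sum_eq_zero fun S _ => ?_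
    have hS := lift_eq_sum_basisFreeMonoid_repr f fun x => ∑ i ∈ S with u i = x, z i
    rw [hA, Finsupp.sum] at hS
    simp only [smul_comm (b.repr f _)]
    rw [← smul_sum, ← hS, smul_zero]
  rw [sum_congr rfl fun w hw => by
      rw [sum_neg_one_pow_card_smul_prod_map u z w.toList
        (by simpa [FreeMonoid.length] using hmax w hw), smul_comm],
    ← smul_sum, smul_eq_zero_iff_right (pow_ne_zero _ (neg_ne_zero.mpr one_ne_zero))] at hzero
  simp only [smul_sum, smul_ite, smul_zero] at hzero
  rw [sum_comm] at hzero
  rw [← hzero]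
  refine sum_congr rfl fun g _ => ?_
  rw [sum_eq_single (FreeMonoid.ofList (List.ofFn (u ∘ g)))]
  · exact (if_pos rfl).symm
  · exact fun w _ hw => if_neg fun h => hw (congrArg FreeMonoid.ofList h).symm
  · intro h
    rw [Finsupp.notMem_support_iff.mp h]
    simp

end PermutationIdentity

section DescendingSublists

lemma exists_blocks_of_sublist {V : Type*} {s l : List V} (h : s.Sublist l) :
    ∃ (p : List V) (bs : List (V × List V)),
      l = p ++ bs.flatMap (fun b => b.1 :: b.2) ∧ bs.map Prod.fst = s := by
  induction h with
  | slnil => exact ⟨[], [], rfl, rfl⟩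
  | cons a _ ih =>
    obtain ⟨p, bs, rfl, h⟩ := ih
    exact ⟨a :: p, bs, rfl, h⟩
  | cons_cons a _ ih =>
    obtain ⟨p, bs, rfl, h⟩ := ih
    exact ⟨[], (a, p) :: bs, rfl, by simp [h]⟩

variable {V : Type*} [LinearOrder V]

lemma flatMap_lt_of_perm {L M : List (V × List V)} (hL : L.Pairwise fun a b => b.1 < a.1)
    (hp : M.Perm L) (hne : M ≠ L) :
    M.flatMap (fun b => b.1 :: b.2) < L.flatMap (fun b => b.1 :: b.2) := by
  induction L generalizing M with
  | nil => exact absurd (List.perm_nil.mp hp) hne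
  | cons b L ih =>
    obtain _ | ⟨c, M⟩ := M
    · simp at hp
    simp only [List.flatMap_cons]
    obtain rfl | hcb := eq_or_ne c b
    · have htail : M.flatMap (fun b => b.1 :: b.2) < L.flatMap (fun b => b.1 :: b.2) :=
        ih hL.of_cons ((List.perm_cons c).mp hp) (by simpa using hne)
      exact List.Lex.append_left (· < ·) htail _
    · have hc : c ∈ L := (List.mem_cons.mp (hp.subset List.mem_cons_self)).resolve_left hcb
      exact List.Lex.rel (List.rel_of_pairwise_cons hL hc)

lemma eq_of_perm_of_map_eq {γ : Type*} {c : V → γ} {l l' : List V}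
    (hl : l.Pairwise fun a b => c a = c b → a < b) (hl' : l'.Pairwise fun a b => c a = c b → a < b)
    (hp : l.Perm l') (hc : l.map c = l'.map c) : l = l' := by
  induction l generalizing l' with
  | nil => exact (List.nil_perm.mp hp).symm
  | cons a t ih =>
    obtain _ | ⟨b, t'⟩ := l'
    · simp at hp
    simp only [List.map_cons, List.cons.injEq] at hc
    obtain rfl | hab := eq_or_ne a b
    · rw [ih hl.of_cons hl'.of_cons ((List.perm_cons a).mp hp) hc.2]
    · have hb : b ∈ t :=
        (List.mem_cons.mp (hp.symm.subset List.mem_cons_self)).resolve_left hab.symm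
      have ha : a ∈ t' := (List.mem_cons.mp (hp.subset List.mem_cons_self)).resolve_left hab
      exact absurd (List.rel_of_pairwise_cons hl hb hc.1)
        (List.rel_of_pairwise_cons hl' ha hc.1.symm).asymm

/-- The lists without descending sublists of length `k`. -/
def DescentsShorter (k : ℕ) (l : List V) : Prop :=
  ∀ s : List V, s.Sublist l → s.Pairwise (· > ·) → s.length < k

/-- Colour each entry by the length of a longest descending sublist starting there. -/
lemma exists_coloring_of_nodup {l : List V} (hl : l.Nodup) :
    ∃ c : V → ℕ, (l.Pairwise fun a b => c a = c b → a < b) ∧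
      ∀ a ∈ l, ∃ s, (a :: s).Sublist l ∧ (a :: s).Pairwise (· > ·) ∧ s.length = c a := by
  induction l with
  | nil => exact ⟨fun _ => 0, List.Pairwise.nil, by simp⟩
  | cons a t ih =>
    obtain ⟨ha, ht⟩ := List.nodup_cons.mp hl
    obtain ⟨c, hc, hs⟩ := ih ht
    let n : ℕ := {b ∈ t.toFinset | b < a}.sup fun b => c b + 1
    have hlt_n : ∀ b ∈ t, b < a → c b < n := fun b hb hba =>
      Finset.le_sup (f := fun b => c b + 1) (by simp [hb, hba])
    have hn : ∃ s, (a :: s).Sublist (a :: t) ∧ (a :: s).Pairwise (· > ·) ∧ s.length = n := by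
      obtain hempty | hne := {b ∈ t.toFinset | b < a}.eq_empty_or_nonempty
      · exact ⟨[], by simp, by simp, by simp [n, hempty]⟩
      obtain ⟨b, hb, hnb⟩ := Finset.exists_mem_eq_sup _ hne fun b => c b + 1
      obtain ⟨hbt, hba⟩ : b ∈ t ∧ b < a := by simpa using hb
      obtain ⟨s, hsub, hdec, hlen⟩ := hs b hbt
      refine ⟨b :: s, hsub.cons_cons _, List.pairwise_cons.mpr ⟨fun x hx => ?_, hdec⟩,
        by rw [List.length_cons, hlen, ← hnb]⟩
      obtain rfl | hx := List.mem_cons.mp hx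
      · exact hba
      · exact (List.rel_of_pairwise_cons hdec hx).trans hba
    have hne : ∀ b ∈ t, b ≠ a := fun b hb h => ha (h ▸ hb)
    have hupd : ∀ b ∈ t, Function.update c a n b = c b := fun b hb =>
      Function.update_of_ne (hne b hb) _ _
    refine ⟨Function.update c a n, List.pairwise_cons.mpr ⟨fun b hb h => ?_, ?_⟩, fun b hb => ?_⟩
    · rw [Function.update_self, hupd b hb] at h
      by_contra hba
      exact (hlt_n b hb ((not_lt.mp hba).lt_of_ne (hne b hb))).ne h.symm
    · exact hc.imp_of_mem fun hx hy h => by rwa [hupd _ hx, hupd _ hy]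
    · obtain rfl | hb := List.mem_cons.mp hb
      · rwa [Function.update_self]
      · rw [hupd b hb]
        obtain ⟨s, hsub, hdec, hlen⟩ := hs b hb
        exact ⟨s, hsub.cons _, hdec, hlen⟩

lemma DescentsShorter.exists_fin_coloring {k : ℕ} {l : List V} (hk : DescentsShorter k l)
    (hl : l.Nodup) (hmem : ∀ v, v ∈ l) :
    ∃ c : V → Fin k, l.Pairwise fun a b => c a = c b → a < b := by
  obtain ⟨c, hc, hs⟩ := exists_coloring_of_nodup hl
  have hlt (v : V) : c v < k := by
    obtain ⟨s, hsub, hdec, hlen⟩ := hs v (hmem v)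
    have := hk _ hsub hdec
    rw [List.length_cons] at this
    lia
  exact ⟨fun v => ⟨c v, hlt v⟩, hc.imp fun h h' => h (congrArg Fin.val h')⟩

end DescendingSublists

section Arrangement

/-- The lists containing each element of `V` exactly once. -/
def Arrangement (V : Type*) : Type _ := {l : List V // l.Nodup ∧ ∀ v, v ∈ l}

namespace Arrangement

variable {V W : Type*}

instance [Finite V] : Finite (Arrangement V) := by
  have := Fintype.ofFinite V
  classical
  exact Finite.of_injective (fun l : Arrangement V => (⟨l.1, l.2.1⟩ : {l : List V // l.Nodup}))
    fun l l' h => Subtype.ext (Subtype.mk.inj h)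

lemma perm (l l' : Arrangement V) : l.1.Perm l'.1 :=
  (List.perm_ext_iff_of_nodup l.2.1 l'.2.1).mpr fun v => by simp [l.2.2, l'.2.2]

lemma length_eq [Fintype V] (l : Arrangement V) : l.1.length = Fintype.card V := by
  classical
  rw [← List.toFinset_card_of_nodup l.2.1, ← Finset.card_univ]
  congr 1
  ext v
  simp [l.2.2]

lemma card_descentsShorter_le [Fintype V] [LinearOrder V] (k : ℕ) :
    Nat.card {l : Arrangement V // DescentsShorter k l.1} ≤ k ^ (2 * Fintype.card V) := by
  choose c hc using fun l : {l : Arrangement V // DescentsShorter k l.1} =>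
    l.2.exists_fin_coloring l.1.2.1 l.1.2.2
  have hinj : Function.Injective fun l => ((c l, ⟨l.1.1.map (c l), by
      rw [List.length_map, length_eq]⟩) : (V → Fin k) × List.Vector (Fin k) (Fintype.card V)) := by
    intro l l' h
    have hcolor : c l = c l' := congrArg Prod.fst h
    have hmap : l.1.1.map (c l) = l'.1.1.map (c l') := congrArg (fun p => p.2.1) h
    rw [← hcolor] at hmap
    exact Subtype.ext (Subtype.ext
      (eq_of_perm_of_map_eq (hc l) (hcolor ▸ hc l') (perm _ _) hmap))
  refine (Nat.card_le_card_of_injective _ hinj).trans_eq ?_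
  rw [Nat.card_prod, Nat.card_eq_fintype_card, Nat.card_eq_fintype_card, card_vector,
    Fintype.card_fun, Fintype.card_fin, two_mul, pow_add]

/-- The arrangement of `W` obtained by applying a bijection to the entries. -/
def map (e : V ≃ W) (l : Arrangement V) : Arrangement W :=
  ⟨l.1.map e, l.2.1.map e.injective, fun w => List.mem_map.mpr ⟨e.symm w, l.2.2 _, by simp⟩⟩

section Value

variable {A : Type*} [Ring A]

/-- The multilinear monomial of an arrangement: the product of the arguments in that order. -/
def value (A : Type*) [Ring A] (l : Arrangement V) (z : V → A) : A := (l.1.map z).prod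

lemma value_map (e : V ≃ W) (l : Arrangement V) (z : W → A) :
    (l.map e).value A z = l.value A (z ∘ e) := by
  simp [value, map]

variable {F : Type*} [Field F] [Algebra F A] {k : ℕ} {β : Equiv.Perm (Fin k) → F}

lemma sum_smul_prod_blocks_eq_zero
    (hA : ∀ z : Fin k → A, ∑ g, β g • (List.ofFn (z ∘ g)).prod = 0) (p : List V)
    (b : Fin k → List V) (z : V → A) :
    ∑ g : Equiv.Perm (Fin k), β g • ((p ++ (List.ofFn (b ∘ g)).flatten).map z).prod = 0 := by
  have h := congrArg ((p.map z).prod * ·) (hA fun i => ((b i).map z).prod)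
  simp only [mul_zero, Finset.mul_sum, mul_smul_comm] at h
  rw [← h]
  refine Finset.sum_congr rfl fun g _ => ?_
  rw [List.map_append, List.prod_append, List.map_flatten, List.prod_flatten, List.map_map,
    List.map_ofFn]
  rfl

/-- Permuting the blocks that start at the entries of a descending sublist makes the word
lexicographically smaller. -/
lemma value_mem_span_of_sublist [LinearOrder V] (hβ : β 1 ≠ 0)
    (hA : ∀ z : Fin k → A, ∑ g, β g • (List.ofFn (z ∘ g)).prod = 0) (l : Arrangement V)
    {s : List V} (hs : s.Sublist l.1) (hk : s.length = k) (hdec : s.Pairwise (· > ·)) :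
    l.value A ∈ Submodule.span F (value A '' {l' | l'.1 < l.1}) := by
  obtain ⟨p, bs, hl, rfl⟩ := exists_blocks_of_sublist hs
  obtain rfl : bs.length = k := by rw [← hk, List.length_map]
  rw [List.pairwise_map] at hdec
  have hinj : Function.Injective bs.get :=
    List.nodup_iff_injective_get.mp (hdec.imp fun h h' => (h' ▸ h).false)
  let blocks (g : Equiv.Perm (Fin bs.length)) : List (V × List V) := List.ofFn (bs.get ∘ g)
  have hblocks (g) : (blocks g).Perm bs := by
    simpa [blocks] using Equiv.Perm.ofFn_comp_perm g bs.get
  have hperm (g) : (p ++ (blocks g).flatMap fun b => b.1 :: b.2).Perm l.1 :=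
    hl ▸ ((hblocks g).flatMap_right _).append_left p
  let L (g : Equiv.Perm (Fin bs.length)) : Arrangement V :=
    ⟨_, (hperm g).nodup_iff.mpr l.2.1, fun v => (hperm g).mem_iff.mpr (l.2.2 v)⟩
  have hL1 : L 1 = l := Subtype.ext (by simp [L, blocks, hl])
  have hlt (g) (hg : g ≠ 1) : (L g).1 < l.1 := by
    have hne : blocks g ≠ bs := by
      rw [← List.ofFn_get bs]
      exact fun h => hg (Equiv.ext fun i => hinj (congrFun (List.ofFn_injective h) i))
    change p ++ (blocks g).flatMap (fun b => b.1 :: b.2) < l.1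
    rw [hl]
    exact List.Lex.append_left (· < ·) (flatMap_lt_of_perm hdec (hblocks g) hne) p
  have hsum : ∑ g, β g • (L g).value A = 0 := by
    funext z
    rw [Finset.sum_apply, Pi.zero_apply,
      ← sum_smul_prod_blocks_eq_zero hA p (fun i => (bs.get i).1 :: (bs.get i).2) z]
    refine Finset.sum_congr rfl fun g _ => ?_
    simp [value, L, blocks, List.flatMap, List.map_ofFn, Function.comp_def]
  rw [← Finset.add_sum_erase _ _ (Finset.mem_univ 1), hL1, add_eq_zero_iff_eq_neg] at hsum
  rw [← inv_smul_smul₀ hβ (l.value A), hsum]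
  exact Submodule.smul_mem _ _ (Submodule.neg_mem _ (Submodule.sum_mem _ fun g hg =>
    Submodule.smul_mem _ _ (Submodule.subset_span ⟨L g, hlt g (Finset.ne_of_mem_erase hg), rfl⟩)))

/-- The space of functions spanned by the multilinear monomials. -/
def valueSpan (F A V : Type*) [Field F] [Ring A] [Algebra F A] : Submodule F ((V → A) → A) :=
  Submodule.span F (Set.range (value A))

instance [Finite V] : FiniteDimensional F (valueSpan F A V) :=
  FiniteDimensional.span_of_finite F (Set.finite_range _)

lemma valueSpan_eq_span_descentsShorter [Finite V] [LinearOrder V] (hβ : β 1 ≠ 0)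
    (hA : ∀ z : Fin k → A, ∑ g, β g • (List.ofFn (z ∘ g)).prod = 0) :
    valueSpan F A V = Submodule.span F (Set.range
      fun l : {l : Arrangement V // DescentsShorter k l.1} => l.1.value A) := by
  refine le_antisymm (Submodule.span_le.mpr ?_) (Submodule.span_mono ?_)
  · rintro _ ⟨l, rfl⟩
    have hwf : WellFounded fun l l' : Arrangement V => l.1 < l'.1 := by
      have : IsTrans (Arrangement V) fun l l' => l.1 < l'.1 := ⟨fun _ _ _ => lt_trans⟩
      have : Std.Irrefl fun l l' : Arrangement V => l.1 < l'.1 := ⟨fun _ => lt_irrefl _⟩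
      exact Finite.wellFounded_of_trans_of_irrefl _
    induction l using hwf.induction with
    | _ l ih =>
    by_cases h : DescentsShorter k l.1
    · exact Submodule.subset_span ⟨⟨l, h⟩, rfl⟩
    · simp only [DescentsShorter] at h
      push Not at h
      obtain ⟨s, hs, hdec, hk⟩ := h
      refine Submodule.span_le.mpr ?_ (value_mem_span_of_sublist hβ hA l
        ((List.take_sublist k s).trans hs) (by simp [hk]) (hdec.sublist (List.take_sublist k s)))
      rintro _ ⟨l', hlt, rfl⟩
      exact ih l' hlt
  · rintro _ ⟨l, rfl⟩
    exact ⟨l.1, rfl⟩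

lemma finrank_valueSpan_le [Fintype V] (hβ : β 1 ≠ 0)
    (hA : ∀ z : Fin k → A, ∑ g, β g • (List.ofFn (z ∘ g)).prod = 0) :
    Module.finrank F (valueSpan F A V) ≤ k ^ (2 * Fintype.card V) := by
  classical
  let : LinearOrder V := LinearOrder.lift' (Fintype.equivFin V) (Fintype.equivFin V).injective
  rw [valueSpan_eq_span_descentsShorter hβ hA]
  have := Fintype.ofFinite {l : Arrangement V // DescentsShorter k l.1}
  refine (finrank_range_le_card _).trans ?_
  rw [← Nat.card_eq_fintype_card]
  exact card_descentsShorter_le k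

end Value

end Arrangement

end Arrangement

section Words

variable {ι κ A : Type*}

/-- The variables of a word, in order of occurrence. -/
def wordVars (l : List (ι ⊕ A)) : List ι := l.filterMap Sum.getLeft?

/-- A word in which each variable occurs exactly once. -/
def IsMultilinearWord (l : List (ι ⊕ A)) : Prop :=
  (wordVars l).Nodup ∧ ∀ i, i ∈ wordVars l

@[simp] lemma wordVars_nil : wordVars ([] : List (ι ⊕ A)) = [] := rfl

@[simp] lemma wordVars_cons_inl (i : ι) (l : List (ι ⊕ A)) :
    wordVars (Sum.inl i :: l) = i :: wordVars l := rfl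

@[simp] lemma wordVars_cons_inr (a : A) (l : List (ι ⊕ A)) :
    wordVars (Sum.inr a :: l) = wordVars l := rfl

@[simp] lemma wordVars_append (l l' : List (ι ⊕ A)) :
    wordVars (l ++ l') = wordVars l ++ wordVars l' := by simp [wordVars]

/-- Substitution of words for the variables of a word. -/
def wordSubst (h : ι → List (κ ⊕ A)) (l : List (ι ⊕ A)) : List (κ ⊕ A) :=
  l.flatMap (Sum.elim h fun a => [Sum.inr a])

@[simp] lemma wordSubst_cons (h : ι → List (κ ⊕ A)) (c : ι ⊕ A) (l : List (ι ⊕ A)) :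
    wordSubst h (c :: l) = Sum.elim h (fun a => [Sum.inr a]) c ++ wordSubst h l := rfl

lemma wordVars_subst (h : ι → List (κ ⊕ A)) (l : List (ι ⊕ A)) :
    wordVars (wordSubst h l) = (wordVars l).flatMap fun i => wordVars (h i) := by
  induction l with
  | nil => rfl
  | cons c l ih => cases c <;> simp [ih]

lemma wordVars_rename (s : ι → κ) (l : List (ι ⊕ A)) :
    wordVars (wordSubst (fun i => [Sum.inl (s i)]) l) = (wordVars l).map s := by
  rw [wordVars_subst, List.map_eq_flatMap]
  rfl

lemma wordVars_map {B : Type*} (g : A → B) (l : List (ι ⊕ A)) :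
    wordVars (l.map (Sum.map id g)) = wordVars l := by
  rw [wordVars, wordVars, List.filterMap_map]
  congr 1
  funext c
  rcases c with i | c <;> rfl

lemma IsMultilinearWord.subst {l : List (ι ⊕ A)} (hl : IsMultilinearWord l)
    {h : ι → List (κ ⊕ A)} (s : κ → ι) (hn : ∀ i, (wordVars (h i)).Nodup)
    (hv : ∀ i j, j ∈ wordVars (h i) ↔ s j = i) : IsMultilinearWord (wordSubst h l) := by
  rw [IsMultilinearWord, wordVars_subst]
  refine ⟨List.nodup_flatMap.mpr ⟨fun i _ => hn i, hl.1.imp fun {i i'} hne j hj hj' => ?_⟩,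
    fun j => List.mem_flatMap.mpr ⟨s j, hl.2 _, (hv _ _).mpr rfl⟩⟩
  exact hne (((hv _ _).mp hj).symm.trans ((hv _ _).mp hj'))

lemma IsMultilinearWord.rename {l : List (ι ⊕ A)} (hl : IsMultilinearWord l) (e : ι ≃ κ) :
    IsMultilinearWord (wordSubst (fun i => [(Sum.inl (e i) : κ ⊕ A)]) l) :=
  hl.subst e.symm (by simp) fun i j => by simp [e.symm_apply_eq]

variable [Ring A]

/-- The value of a word with letters from a set of variables and from `A`. -/
def wordEval (l : List (ι ⊕ A)) (x : ι → A) : A := (l.map (Sum.elim x id)).prod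

@[simp] lemma wordEval_nil (x : ι → A) : wordEval [] x = 1 := rfl

@[simp] lemma wordEval_cons_inl (i : ι) (l : List (ι ⊕ A)) (x : ι → A) :
    wordEval (Sum.inl i :: l) x = x i * wordEval l x := by simp [wordEval]

@[simp] lemma wordEval_cons_inr (a : A) (l : List (ι ⊕ A)) (x : ι → A) :
    wordEval (Sum.inr a :: l) x = a * wordEval l x := by simp [wordEval]

@[simp] lemma wordEval_append (l l' : List (ι ⊕ A)) (x : ι → A) :
    wordEval (l ++ l') x = wordEval l x * wordEval l' x := by simp [wordEval]

lemma wordEval_subst (h : ι → List (κ ⊕ A)) (l : List (ι ⊕ A)) (x : κ → A) :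
    wordEval (wordSubst h l) x = wordEval l fun i => wordEval (h i) x := by
  induction l with
  | nil => rfl
  | cons c l ih => cases c <;> simp [ih]

lemma wordEval_rename (s : ι → κ) (l : List (ι ⊕ A)) (x : κ → A) :
    wordEval (wordSubst (fun i => [Sum.inl (s i)]) l) x = wordEval l (x ∘ s) := by
  rw [wordEval_subst]
  simp [Function.comp_def]

lemma wordEval_map {B : Type*} [Ring B] (g : A →+* B) (l : List (ι ⊕ A)) (x : ι → A) :
    wordEval (l.map (Sum.map id g)) (g ∘ x) = g (wordEval l x) := by
  rw [wordEval, wordEval, map_list_prod, List.map_map, List.map_map]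
  congr 2
  funext c
  rcases c with i | c <;> rfl

/-- The variables of a multilinear word outside the range of `e` can be specialised. -/
lemma IsMultilinearWord.exists_wordEval_extend {l : List (ι ⊕ A)} (hl : IsMultilinearWord l)
    {e : κ → ι} (he : Function.Injective e) (u : κ → A) (x : ι → A) :
    ∃ l' : List (κ ⊕ A), IsMultilinearWord l' ∧
      ∀ y, wordEval l' y = wordEval l (Function.extend e (u * y) x) := by
  let h : ι → List (κ ⊕ A) :=
    Function.extend e (fun j => [Sum.inr (u j), Sum.inl j]) fun i => [Sum.inr (x i)]
  have hin (j) : h (e j) = [Sum.inr (u j), Sum.inl j] := he.extend_apply _ _ j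
  have hout {i} (hi : ¬ ∃ j, e j = i) : h i = [Sum.inr (x i)] := Function.extend_apply' _ _ i hi
  refine ⟨wordSubst h l, hl.subst e (fun i => ?_) fun i j => ?_, fun y => ?_⟩
  · by_cases hi : ∃ j, e j = i
    · obtain ⟨j, rfl⟩ := hi
      simp [hin]
    · simp [hout hi]
  · by_cases hi : ∃ j, e j = i
    · obtain ⟨j', rfl⟩ := hi
      simp [hin, he.eq_iff]
    · simp [hout hi, not_exists.mp hi j]
  · rw [wordEval_subst]
    congr 1
    funext i
    by_cases hi : ∃ j, e j = i
    · obtain ⟨j, rfl⟩ := hi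
      simp [hin, he.extend_apply]
    · simp [hout hi, Function.extend_apply' _ _ i hi]

lemma wordEval_congr {l : List (ι ⊕ A)} {x y : ι → A} (h : ∀ i ∈ wordVars l, x i = y i) :
    wordEval l x = wordEval l y := by
  induction l with
  | nil => rfl
  | cons a l ih =>
    rcases a with i | a
    · simp only [wordVars_cons_inl, List.mem_cons, forall_eq_or_imp] at h
      simp [h.1, ih h.2]
    · simp only [wordVars_cons_inr] at h
      simp [ih h]

lemma exists_wordEval_update_eq [DecidableEq ι] {l : List (ι ⊕ A)} (hl : (wordVars l).Nodup)
    {i : ι} (hi : i ∈ wordVars l) (x : ι → A) :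
    ∃ a b : A, ∀ v, wordEval l (Function.update x i v) = a * v * b := by
  induction l with
  | nil => simp at hi
  | cons c l ih =>
    rcases c with j | c
    · simp only [wordVars_cons_inl, List.nodup_cons, List.mem_cons] at hl hi
      obtain ⟨hj, hn⟩ := hl
      rcases hi with rfl | hi
      · refine ⟨1, wordEval l x, fun v => ?_⟩
        rw [wordEval_cons_inl, Function.update_self, one_mul, wordEval_congr (y := x)]
        exact fun k hk => Function.update_of_ne (ne_of_mem_of_not_mem hk hj) _ _
      · obtain ⟨a, b, h⟩ := ih hn hi
        refine ⟨x j * a, b, fun v => ?_⟩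
        rw [wordEval_cons_inl, h, Function.update_of_ne (ne_of_mem_of_not_mem hi hj).symm,
          mul_assoc, mul_assoc, mul_assoc]
    · obtain ⟨a, b, h⟩ := ih hl hi
      exact ⟨c * a, b, fun v => by rw [wordEval_cons_inr, h, mul_assoc, mul_assoc, mul_assoc]⟩

lemma wordEval_eq_mul_prod {l : List (ι ⊕ A)} (hl : (wordVars l).Nodup) :
    ∃ (a : A) (y : ι → A), ∀ x, wordEval l x = a * ((wordVars l).map fun i => x i * y i).prod := by
  classical
  induction l with
  | nil => exact ⟨1, 0, fun x => by simp⟩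
  | cons c l ih =>
    rcases c with j | c
    · simp only [wordVars_cons_inl, List.nodup_cons] at hl
      obtain ⟨a, y, h⟩ := ih hl.2
      refine ⟨1, Function.update y j a, fun x => ?_⟩
      simp only [wordEval_cons_inl, wordVars_cons_inl, List.map_cons, List.prod_cons,
        Function.update_self, one_mul, h, mul_assoc]
      congr 3
      refine List.map_congr_left fun i hi => ?_
      rw [Function.update_of_ne (ne_of_mem_of_not_mem hi hl.1)]
    · obtain ⟨a, y, h⟩ := ih hl
      exact ⟨c * a, y, fun x => by simp [h, mul_assoc]⟩

lemma IsMultilinearWord.exists_arrangement {l : List (ι ⊕ A)} (hl : IsMultilinearWord l) :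
    ∃ (l' : Arrangement (Option (ι ⊕ ι))) (a : A) (y : ι → A), ∀ x,
      wordEval l x = l'.value A fun v => v.elim a (Sum.elim x y) := by
  classical
  obtain ⟨a, y, h⟩ := wordEval_eq_mul_prod hl.1
  refine ⟨⟨none :: (wordVars l).flatMap fun i => [some (Sum.inl i), some (Sum.inr i)],
    ?_, ?_⟩, a, y, fun x => ?_⟩
  · rw [List.nodup_cons]
    refine ⟨by simp, List.nodup_flatMap.mpr ⟨by simp, hl.1.imp fun hij => ?_⟩⟩
    simp [Function.onFun, Ne.symm hij]
  · rintro (_ | i | i) <;> simp [hl.2]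
  · rw [h]
    simp only [Arrangement.value, List.map_cons, List.prod_cons, List.map_flatMap, Option.elim]
    congr 1
    rw [List.flatMap, List.prod_flatten, List.map_map]
    congr 2
    ext i
    simp

end Words

section Sparse

variable {F A : Type*} [Field F] [Ring A] [Algebra F A] {k : ℕ} {β : Equiv.Perm (Fin k) → F}

lemma exists_sq_pow_lt_factorial (k : ℕ) : ∃ d : ℕ, (k ^ (2 * (2 * d + 1))) ^ 2 < d.factorial := by
  have h := (FloorSemiring.tendsto_pow_div_factorial_atTop ((k : ℝ) ^ 8)).const_mul ((k : ℝ) ^ 4)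
  rw [mul_zero] at h
  obtain ⟨d, hd⟩ := (h.eventually_lt_const one_pos).exists
  refine ⟨d, ?_⟩
  have hpos : (0 : ℝ) < d.factorial := by positivity
  rw [← mul_div_assoc, div_lt_one hpos] at hd
  have : ((k ^ (2 * (2 * d + 1))) ^ 2 : ℝ) = (k : ℝ) ^ 4 * ((k : ℝ) ^ 8) ^ d := by ring
  rw [← this] at hd
  exact_mod_cast hd

/-- The operator on functions of several arguments permuting the arguments. -/
def permuteArgs (F A : Type*) [Field F] [Ring A] [Algebra F A] {V : Type*} (e : Equiv.Perm V) :
    ((V → A) → A) →ₗ[F] ((V → A) → A) :=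
  LinearMap.funLeft F A fun z => z ∘ e

lemma permuteArgs_mem_valueSpan {V : Type*} (e : Equiv.Perm V) (f : (V → A) → A)
    (hf : f ∈ Arrangement.valueSpan F A V) : permuteArgs F A e f ∈ Arrangement.valueSpan F A V := by
  have h : Arrangement.valueSpan F A V ≤
      (Arrangement.valueSpan F A V).comap (permuteArgs F A e) := by
    refine Submodule.span_le.mpr ?_
    rintro _ ⟨l, rfl⟩
    exact Submodule.subset_span ⟨l.map e, funext (l.value_map e)⟩
  exact h hf

lemma exists_linear_relation_of_sq_finrank_lt {M P : Type*} [AddCommGroup M] [Module F M]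
    [Fintype P] [FiniteDimensional F M] (T : P → Module.End F M)
    (hP : (Module.finrank F M) ^ 2 < Fintype.card P) :
    ∃ (α : P → F) (ρ₀ : P), α ρ₀ ≠ 0 ∧ ∀ m, ∑ ρ, α ρ • T ρ m = 0 := by
  have hdep : ¬ LinearIndependent F T := fun h => by
    have h1 := h.fintype_card_le_finrank
    rw [Module.finrank_linearMap, ← sq] at h1
    exact absurd h1 (not_le.mpr hP)
  obtain ⟨α, hα, ρ₀, hρ₀⟩ := Fintype.not_linearIndependent_iff.mp hdep
  refine ⟨α, ρ₀, hρ₀, fun m => ?_⟩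
  simpa using LinearMap.congr_fun hα m

lemma exists_permuteArgs_relation {V P : Type*} [Finite V] [Fintype P] (e : P → Equiv.Perm V)
    (hP : (Module.finrank F (Arrangement.valueSpan F A V)) ^ 2 < Fintype.card P) :
    ∃ (α : P → F) (ρ₀ : P), α ρ₀ ≠ 0 ∧ ∀ (l : Arrangement V) (z : V → A),
      ∑ ρ, α ρ • l.value A (z ∘ e ρ) = 0 := by
  obtain ⟨α, ρ₀, hρ₀, hα⟩ := exists_linear_relation_of_sq_finrank_lt (fun ρ =>
    (permuteArgs F A (e ρ)).restrict (permuteArgs_mem_valueSpan (e ρ))) hP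
  refine ⟨α, ρ₀, hρ₀, fun l z => ?_⟩
  have h1 := congrArg (Submodule.subtype _) (hα ⟨l.value A, Submodule.subset_span ⟨l, rfl⟩⟩)
  rw [map_sum] at h1
  have h2 := congrFun h1 z
  rw [Finset.sum_apply] at h2
  exact h2

/-- The operators permuting the variables act on a space of dimension at most
`k ^ (2 * (2 * d + 1))`, eventually too small for all `d!` of them to be linearly independent. -/
theorem exists_sparse_identity (hβ : β 1 ≠ 0)
    (hA : ∀ z : Fin k → A, ∑ g, β g • (List.ofFn (z ∘ g)).prod = 0) :
    ∃ (d : ℕ) (α : Equiv.Perm (Fin d) → F), α 1 = 1 ∧ ∀ l : List (Fin d ⊕ A),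
      IsMultilinearWord l → ∀ x, ∑ ρ, α ρ • wordEval l (x ∘ ρ) = 0 := by
  obtain ⟨d, hd⟩ := exists_sq_pow_lt_factorial k
  have hcard : (Module.finrank F (Arrangement.valueSpan F A (Option (Fin d ⊕ Fin d)))) ^ 2 <
      Fintype.card (Equiv.Perm (Fin d)) := by
    have h := Arrangement.finrank_valueSpan_le (V := Option (Fin d ⊕ Fin d)) hβ hA
    rw [Fintype.card_option, Fintype.card_sum, Fintype.card_fin, ← two_mul] at h
    rw [Fintype.card_perm, Fintype.card_fin]
    exact (Nat.pow_le_pow_left h 2).trans_lt hd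
  obtain ⟨α, ρ₀, hρ₀, hα⟩ := exists_permuteArgs_relation
    (fun ρ : Equiv.Perm (Fin d) => Equiv.optionCongr (Equiv.sumCongr ρ (Equiv.refl _))) hcard
  have hsum : ∀ l : List (Fin d ⊕ A), IsMultilinearWord l → ∀ x,
      ∑ ρ, α ρ • wordEval l (x ∘ ρ) = 0 := by
    intro l hl x
    obtain ⟨l', a, y, h⟩ := hl.exists_arrangement
    rw [← hα l' fun v => v.elim a (Sum.elim x y)]
    refine Finset.sum_congr rfl fun ρ _ => ?_
    rw [h]
    congr 2
    funext v
    rcases v with _ | i | i <;> rfl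
  refine ⟨d, fun σ => (α ρ₀)⁻¹ * α (ρ₀ * σ), by simp [hρ₀], fun l hl x => ?_⟩
  have h := hsum l hl (x ∘ ⇑ρ₀⁻¹)
  rw [← Equiv.sum_comp (Equiv.mulLeft ρ₀)] at h
  simp only [mul_smul, ← Finset.smul_sum]
  rw [← smul_zero (α ρ₀)⁻¹, ← h]
  congr 1
  refine Finset.sum_congr rfl fun σ _ => ?_
  congr 2
  funext i
  simp

end Sparse

section Capelli

variable {F A ι X : Type*} [Field F] [Ring A] [Algebra F A]

lemma multilinearMap_eq_zero_of_span_eq_top {M M' : Type*} [AddCommGroup M] [Module F M]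
    [AddCommGroup M'] [Module F M'] [Finite ι] {s : Set M} (hs : Submodule.span F s = ⊤)
    {f : MultilinearMap F (fun _ : ι => M) M'} (hf : ∀ x : ι → M, (∀ i, x i ∈ s) → f x = 0) :
    f = 0 := by
  refine Module.Basis.ext_multilinear (fun _ => Module.Basis.ofSpan hs.ge) fun v => ?_
  exact hf _ fun i => Module.Basis.ofSpan_subset hs.ge ⟨v i, rfl⟩

variable (F) in
/-- The multilinear map defined by a multilinear word. -/
def wordMultilinear (l : List (ι ⊕ A)) (hl : IsMultilinearWord l) :
    MultilinearMap F (fun _ : ι => A) A where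
  toFun := wordEval l
  map_update_add' x i v w := by
    obtain ⟨a, b, h⟩ := exists_wordEval_update_eq hl.1 (hl.2 i) x
    simp only [h, mul_add, add_mul]
  map_update_smul' x i c v := by
    obtain ⟨a, b, h⟩ := exists_wordEval_update_eq hl.1 (hl.2 i) x
    simp only [h, mul_smul_comm, smul_mul_assoc]

lemma span_range_map_prod_eq_top {a : X → A} (ha : Algebra.adjoin F (Set.range a) = ⊤) :
    Submodule.span F (Set.range fun w : List X => (w.map a).prod) = ⊤ := by
  rw [← Algebra.top_toSubmodule, ← ha, Algebra.adjoin_eq_span]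
  congr 1
  ext z
  constructor
  · rintro ⟨w, rfl⟩
    refine Submonoid.list_prod_mem _ fun y hy => ?_
    obtain ⟨v, -, rfl⟩ := List.mem_map.mp hy
    exact Submonoid.subset_closure ⟨v, rfl⟩
  · intro hz
    obtain ⟨L, hL, rfl⟩ := Submonoid.exists_list_of_mem_closure hz
    obtain ⟨w, rfl⟩ : L ∈ Set.range (List.map a) := by
      rw [Set.range_list_map]
      exact hL
    exact ⟨w, rfl⟩

/-- The alternating sum of the values of a word under the permutations of its variables: a value of
a Capelli polynomial, if the word is multilinear. -/
def alternatingEval [Fintype ι] [DecidableEq ι] (l : List (ι ⊕ A)) (x : ι → A) : A :=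
  ∑ σ : Equiv.Perm ι, σ.sign • wordEval l (x ∘ σ)

lemma alternatingEval_comp_perm [Fintype ι] [DecidableEq ι] (l : List (ι ⊕ A)) (x : ι → A)
    (τ : Equiv.Perm ι) : alternatingEval l (x ∘ τ) = τ.sign • alternatingEval l x := by
  rw [alternatingEval, alternatingEval, Finset.smul_sum]
  refine Fintype.sum_equiv (Equiv.mulLeft τ) _ _ fun σ => ?_
  rw [Equiv.coe_mulLeft, Equiv.Perm.sign_mul, smul_smul, ← mul_assoc, Int.units_mul_self, one_mul]
  rfl

lemma alternatingEval_eq_zero_of_eq [Fintype ι] [DecidableEq ι] (l : List (ι ⊕ A)) {x : ι → A}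
    {i j : ι} (hij : i ≠ j) (hx : x i = x j) : alternatingEval l x = 0 := by
  refine Finset.sum_involution (fun σ _ => Equiv.swap i j * σ) (fun σ _ => ?_) (fun σ _ _ h => ?_)
    (fun _ _ => Finset.mem_univ _) fun σ _ => by simp
  · have hswap : x ∘ Equiv.swap i j = x := by
      rw [Equiv.comp_swap_eq_update, hx, Function.update_eq_self, ← hx, Function.update_eq_self]
    rw [Equiv.Perm.coe_mul, ← Function.comp_assoc, hswap, Equiv.Perm.sign_mul,
      Equiv.Perm.sign_swap hij, neg_one_mul, Units.neg_smul, add_neg_cancel]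
  · exact hij (Equiv.swap_eq_one_iff.mp (by simpa using h))

variable (A ι) in
/-- `A` satisfies all Capelli identities alternating in variables indexed by `ι`. -/
def SatisfiesCapelli [Fintype ι] [DecidableEq ι] : Prop :=
  ∀ l : List (ι ⊕ A), IsMultilinearWord l → ∀ x, alternatingEval l x = 0

lemma sum_smul_alternatingEval_extend_eq_zero {d m : ℕ} {α : Equiv.Perm (Fin d) → F}
    (hα : ∀ l : List (Fin d ⊕ A), IsMultilinearWord l → ∀ x, ∑ ρ, α ρ • wordEval l (x ∘ ρ) = 0)
    (a : X → A) {l : List (Fin m ⊕ A)} (hl : IsMultilinearWord l) {e : Fin d → Fin m}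
    (he : Function.Injective e) (u v : Fin d → List X) (w : Fin m → List X) :
    ∑ ρ : Equiv.Perm (Fin d),
      α ρ • alternatingEval l (fun i =>
        ((Function.extend e (fun j => u j ++ v (ρ j)) w i).map a).prod) = 0 := by
  simp only [alternatingEval, Finset.smul_sum]
  rw [Finset.sum_comm]
  refine Finset.sum_eq_zero fun σ _ => ?_
  simp only [smul_comm (α _), ← Finset.smul_sum]
  obtain ⟨l', hl', h⟩ := (hl.rename σ).exists_wordEval_extend he
    (fun j => ((u j).map a).prod) fun p => ((w p).map a).prod
  rw [← smul_zero σ.sign, ← hα l' hl' fun j => ((v j).map a).prod]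
  congr 1
  refine Finset.sum_congr rfl fun ρ _ => ?_
  rw [h, wordEval_rename]
  congr 2
  funext i
  rw [Function.comp_apply, Function.apply_extend fun w : List X => (w.map a).prod]
  congr 1
  funext j
  simp

lemma exists_lt_apply_forall_lt_apply_eq {α : Type*} [LinearOrder α] [WellFoundedLT α]
    {ρ : Equiv.Perm α} (hρ : ρ ≠ 1) : ∃ j, j < ρ j ∧ ∀ i < j, ρ i = i := by
  have hne : {j | ρ j ≠ j}.Nonempty := by
    contrapose! hρ
    exact Equiv.ext fun j => not_not.mp (Set.eq_empty_iff_forall_notMem.mp hρ j)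
  obtain ⟨j, hj, hmin⟩ := WellFounded.has_min wellFounded_lt _ hne
  have hfix : ∀ i < j, ρ i = i := fun i hi => not_not.mp fun h => hmin i h hi
  exact ⟨j, (Ne.symm hj).lt_of_le (not_lt.mp fun h => hj (ρ.injective (hfix _ h))), hfix⟩

lemma toLex_length_extend_lt {m d : ℕ} {e : Fin d ↪o Fin m} {u v : Fin d → List X}
    {w : Fin m → List X} (hw : ∀ j, w (e j) = u j ++ v j)
    (hv : StrictAnti fun j => (v j).length) {ρ : Equiv.Perm (Fin d)} (hρ : ρ ≠ 1) :
    toLex (fun i => (Function.extend e (fun j => u j ++ v (ρ j)) w i).length) <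
      toLex fun i => (w i).length := by
  obtain ⟨j, hj, hfix⟩ := exists_lt_apply_forall_lt_apply_eq hρ
  refine ⟨e j, fun p hp => congrArg List.length (?_ : Function.extend e _ w p = w p), ?_⟩
  · by_cases hpe : ∃ i, e i = p
    · obtain ⟨i, rfl⟩ := hpe
      rw [e.injective.extend_apply, hfix i (e.lt_iff_lt.mp hp), hw]
    · exact Function.extend_apply' _ _ p hpe
  · change (Function.extend e _ w (e j)).length < (w (e j)).length
    rw [e.injective.extend_apply, hw, List.length_append, List.length_append]
    exact Nat.add_lt_add_left (hv hj) _

lemma exists_eq_append_strictAnti {m d : ℕ} {w : Fin m → List X}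
    (hlong : d ≤ (Finset.univ.filter fun i => d ≤ (w i).length).card) :
    ∃ (e : Fin d ↪o Fin m) (u v : Fin d → List X),
      (∀ j, w (e j) = u j ++ v j) ∧ StrictAnti fun j => (v j).length := by
  let e := Finset.orderEmbOfCardLe _ hlong
  have he (j) : d ≤ (w (e j)).length :=
    (Finset.mem_filter.mp (Finset.orderEmbOfCardLe_mem _ hlong j)).2
  refine ⟨e, fun j => (w (e j)).take ((w (e j)).length - (d - j)),
    fun j => (w (e j)).drop ((w (e j)).length - (d - j)),
    fun j => (List.take_append_drop _ _).symm, fun i j hij => ?_⟩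
  have hi := he i
  have hj := he j
  simp only [List.length_drop]
  lia

lemma exists_ne_map_eq_of_card_filter_lt [Finite X] {m d : ℕ} {w : Fin m → List X}
    (hm : d + {w : List X | w.length < d}.ncard ≤ m)
    (hlong : (Finset.univ.filter fun i => d ≤ (w i).length).card < d) :
    ∃ i j, i ≠ j ∧ w i = w j := by
  have hfin : {w : List X | w.length < d}.Finite := List.finite_length_lt X d
  obtain ⟨i, -, j, -, hij, heq⟩ := Finset.exists_ne_map_eq_of_card_lt_of_maps_to
    (s := Finset.univ.filter fun i => ¬ d ≤ (w i).length) (t := hfin.toFinset) (f := w) (by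
      rw [← Set.ncard_eq_toFinset_card _ hfin]
      have := Finset.card_filter_add_card_filter_not (s := (Finset.univ : Finset (Fin m)))
        fun i => d ≤ (w i).length
      rw [Finset.card_univ, Fintype.card_fin] at this
      lia) (fun i hi => by simpa using hi)
  exact ⟨i, j, hij, heq⟩

lemma alternatingEval_map_prod_eq_zero [Finite X] {d m : ℕ} {α : Equiv.Perm (Fin d) → F}
    (hα1 : α 1 = 1)
    (hα : ∀ l : List (Fin d ⊕ A), IsMultilinearWord l → ∀ x, ∑ ρ, α ρ • wordEval l (x ∘ ρ) = 0)
    (a : X → A) (hm : d + {w : List X | w.length < d}.ncard ≤ m)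
    {l : List (Fin m ⊕ A)} (hl : IsMultilinearWord l) (w : Fin m → List X) :
    alternatingEval l (fun i => ((w i).map a).prod) = 0 := by
  have hwf : WellFounded fun w w' : Fin m → List X =>
      toLex (fun i => (w i).length) < toLex (fun i => (w' i).length) :=
    InvImage.wf (fun w : Fin m → List X => toLex fun i => (w i).length) wellFounded_lt
  induction w using hwf.induction with
  | _ w ih =>
  by_cases hlong : d ≤ (Finset.univ.filter fun i => d ≤ (w i).length).card
  · obtain ⟨e, u, v, hw, hv⟩ := exists_eq_append_strictAnti hlong
    have hsum := sum_smul_alternatingEval_extend_eq_zero hα a hl e.injective u v w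
    have hone : Function.extend e (fun j => u j ++ v ((1 : Equiv.Perm (Fin d)) j)) w = w := by
      refine funext fun p => (em (∃ j, e j = p)).elim ?_ (Function.extend_apply' _ _ p)
      rintro ⟨j, rfl⟩
      rw [e.injective.extend_apply, hw, Equiv.Perm.one_apply]
    rwa [← Finset.add_sum_erase _ _ (Finset.mem_univ 1), hα1, one_smul, hone,
      Finset.sum_eq_zero, add_zero] at hsum
    intro ρ hρ
    rw [ih _ (toLex_length_extend_lt hw hv (Finset.ne_of_mem_erase hρ)), smul_zero]
  · obtain ⟨i, j, hij, heq⟩ := exists_ne_map_eq_of_card_filter_lt hm (not_le.mp hlong)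
    exact alternatingEval_eq_zero_of_eq l hij (by rw [heq])

theorem exists_satisfiesCapelli [Finite X] {d : ℕ} {α : Equiv.Perm (Fin d) → F} (hα1 : α 1 = 1)
    (hα : ∀ l : List (Fin d ⊕ A), IsMultilinearWord l → ∀ x, ∑ ρ, α ρ • wordEval l (x ∘ ρ) = 0)
    {a : X → A} (ha : Algebra.adjoin F (Set.range a) = ⊤) : ∃ m, SatisfiesCapelli A (Fin m) := by
  refine ⟨d + {w : List X | w.length < d}.ncard, fun l hl x => ?_⟩
  have hzero : (MultilinearMap.alternatization (wordMultilinear F l hl)).toMultilinearMap = 0 := by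
    refine multilinearMap_eq_zero_of_span_eq_top (span_range_map_prod_eq_top ha) fun x hx => ?_
    choose w hw using hx
    obtain rfl : (fun i => ((w i).map a).prod) = x := funext hw
    exact (MultilinearMap.alternatization_apply _ _).trans
      (alternatingEval_map_prod_eq_zero hα1 hα a le_rfl hl w)
  exact (MultilinearMap.alternatization_apply _ _).symm.trans (congrArg (· x) hzero)

end Capelli

section Traces

variable {ι κ A B : Type*} [Semigroup A] [DecidableEq κ]

/-- Multiplication of the argument in place `p` by `a` from the left. -/
def mulAt (a : A) (p : κ) (x : κ → A) : κ → A := Function.update x p (a * x p)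

lemma mulAt_comm {p q : κ} (h : p ≠ q) (a b : A) (x : κ → A) :
    mulAt a p (mulAt b q x) = mulAt b q (mulAt a p x) := by
  simp only [mulAt, Function.update_of_ne h, Function.update_of_ne h.symm]
  exact Function.update_comm h.symm _ _ _

lemma mulAt_mulAt (p : κ) (a b : A) (x : κ → A) :
    mulAt a p (mulAt b p x) = mulAt (a * b) p x := by
  simp [mulAt, mul_assoc]

lemma mulAt_update (p : κ) (a z : A) (x : κ → A) :
    mulAt a p (Function.update x p z) = Function.update x p (a * z) := by
  simp [mulAt]

variable [Fintype ι] [DecidableEq ι] [AddCommMonoid B]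

/-- The trace of left multiplication by `a` over the places in the range of `e`. -/
def traceAt (e : ι ↪ κ) (a : A) (f : (κ → A) → B) (x : κ → A) : B :=
  ∑ i, f (mulAt a (e i) x)

/-- The lists obtained from `S` by multiplying one entry by `w` from the left. -/
def leftMultiples {P : Type*} [Mul P] (w : P) : List P → List (List P)
  | [] => []
  | s :: S => (w * s :: S) :: (leftMultiples w S).map (s :: ·)

/-- The sum of `f` over the placements of the elements of `S` as left multipliers at distinct places
outside `U`. -/
def placementSum (e : ι ↪ κ) (f : (κ → A) → B) : List A → Finset ι → (κ → A) → B
  | [], _, y => f y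
  | w :: S, U, y => ∑ i ∈ Uᶜ, placementSum e f S (insert i U) (mulAt w (e i) y)

variable {e : ι ↪ κ} {f : (κ → A) → B}

lemma placementSum_perm {S T : List A} (h : S.Perm T) (U : Finset ι) (y : κ → A) :
    placementSum e f S U y = placementSum e f T U y := by
  induction h generalizing U y with
  | nil => rfl
  | cons w _ ih => exact Finset.sum_congr rfl fun i _ => ih _ _
  | trans _ _ ih ih' => rw [ih, ih']
  | swap w v S =>
    simp only [placementSum]
    rw [Finset.sum_sigma', Finset.sum_sigma']
    refine Finset.sum_bij' (fun p _ => ⟨p.2, p.1⟩) (fun p _ => ⟨p.2, p.1⟩) ?_ ?_ ?_ ?_ ?_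
    · rintro ⟨i, j⟩ h
      simp only [Finset.mem_sigma, Finset.mem_compl, Finset.mem_insert, not_or] at h ⊢
      exact ⟨h.2.2, Ne.symm h.2.1, h.1⟩
    · rintro ⟨i, j⟩ h
      simp only [Finset.mem_sigma, Finset.mem_compl, Finset.mem_insert, not_or] at h ⊢
      exact ⟨h.2.2, Ne.symm h.2.1, h.1⟩
    · exact fun _ _ => rfl
    · exact fun _ _ => rfl
    · rintro ⟨i, j⟩ h
      simp only [Finset.mem_sigma, Finset.mem_compl, Finset.mem_insert, not_or] at h
      rw [Finset.insert_comm, mulAt_comm (fun h' => h.2.1 (e.injective h'))]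

lemma placementSum_eq_zero {S : List A} {U : Finset ι} (h : Fintype.card ι < S.length + U.card)
    (y : κ → A) : placementSum e f S U y = 0 := by
  induction S generalizing U y with
  | nil => exact absurd h (not_lt.mpr (by simpa using U.card_le_univ))
  | cons w S ih =>
    refine Finset.sum_eq_zero fun i hi => ih ?_ _
    rw [Finset.card_insert_of_notMem (Finset.mem_compl.mp hi)]
    rw [List.length_cons] at h
    lia

/-- Composing with `traceAt e w` places the additional multiplier `w` everywhere: at a new place,
at a place occupied by an element of `S`, or at a place in `U`. -/
lemma placementSum_traceAt (w : A) (S : List A) (U : Finset ι) (y : κ → A) :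
    placementSum e (traceAt e w f) S U y = placementSum e f (S ++ [w]) U y +
      ((leftMultiples w S).map fun S' => placementSum e f S' U y).sum +
      ∑ i ∈ U, placementSum e f S U (mulAt w (e i) y) := by
  induction S generalizing U y with
  | nil =>
    simp only [placementSum, traceAt, leftMultiples, List.nil_append, List.map_nil, List.sum_nil,
      add_zero]
    rw [add_comm, Finset.sum_add_sum_compl]
  | cons s S ih =>
    simp only [placementSum, leftMultiples, List.cons_append, List.map_cons, List.sum_cons,
      List.map_map, Function.comp_def, ih, Finset.sum_add_distrib]
    have hplaces : ∑ j ∈ Uᶜ, ∑ i ∈ insert j U,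
        placementSum e f S (insert j U) (mulAt w (e i) (mulAt s (e j) y)) =
        ∑ j ∈ Uᶜ, placementSum e f S (insert j U) (mulAt (w * s) (e j) y) +
        ∑ i ∈ U, ∑ j ∈ Uᶜ, placementSum e f S (insert j U) (mulAt s (e j) (mulAt w (e i) y)) := by
      rw [Finset.sum_comm (s := U), ← Finset.sum_add_distrib]
      refine Finset.sum_congr rfl fun j hj => ?_
      rw [Finset.mem_compl] at hj
      rw [Finset.sum_insert hj, mulAt_mulAt]
      congr 1
      refine Finset.sum_congr rfl fun i hi => ?_
      rw [mulAt_comm fun h : e i = e j => hj (e.injective h ▸ hi)]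
    have hlists : ∑ j ∈ Uᶜ, ((leftMultiples w S).map fun S' =>
        placementSum e f S' (insert j U) (mulAt s (e j) y)).sum =
        ((leftMultiples w S).map fun S' => ∑ j ∈ Uᶜ,
          placementSum e f S' (insert j U) (mulAt s (e j) y)).sum := by
      induction leftMultiples w S with
      | nil => simp
      | cons T L ihL => simp [Finset.sum_add_distrib, ihL]
    rw [hplaces, hlists]
    abel

end Traces

section Exchange

variable {ι κ A : Type*} [Ring A] [DecidableEq κ] [Fintype ι] [DecidableEq ι]
  {e : ι ↪ κ} {f : (κ → A) → A}

/-- The sum over the exchanges of an external factor `z` with an argument of `f`, with the elements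
of `S` placed as left multipliers of the remaining arguments. -/
def exchangeSum (e : ι ↪ κ) (S : List A) (z : A) (f : (κ → A) → A) (x : κ → A) : A :=
  ∑ i, x (e i) * placementSum e f S {i} (Function.update x (e i) z)

lemma exchangeSum_eq_zero {S : List A} (h : Fintype.card ι ≤ S.length) (z : A) :
    exchangeSum e S z f = 0 := by
  funext x
  refine Finset.sum_eq_zero fun i _ => ?_
  rw [placementSum_eq_zero (by simpa using Nat.lt_succ_of_le h), mul_zero]

lemma exchangeSum_cons (w : A) (S : List A) (z : A) :
    exchangeSum e (w :: S) z f = exchangeSum e S z (traceAt e w f) -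
      ((leftMultiples w S).map fun S' => exchangeSum e S' z f).sum - exchangeSum e S (w * z) f := by
  have hsum : ∀ L : List (List A), (L.map fun S' => exchangeSum e S' z f).sum = fun x =>
      ∑ i, x (e i) * (L.map fun S' =>
        placementSum e f S' {i} (Function.update x (e i) z)).sum := by
    intro L
    induction L with
    | nil => funext x; simp
    | cons T L ih =>
      funext x
      simp [ih, mul_add, Finset.sum_add_distrib, exchangeSum]
  rw [hsum, eq_sub_iff_add_eq, eq_sub_iff_add_eq]
  funext x
  simp only [Pi.add_apply, exchangeSum, ← Finset.sum_add_distrib, ← mul_add]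
  refine Finset.sum_congr rfl fun i _ => ?_
  rw [placementSum_traceAt, Finset.sum_singleton, mulAt_update,
    placementSum_perm (List.perm_append_singleton w S)]
  congr 1
  abel

end Exchange

section MultilinearFunctions

variable {F A ι κ : Type*} [Field F] [Ring A] [Algebra F A]

variable (F A κ) in
/-- The span of the multilinear words, as functions of their variables. -/
def multilinearFunctions : Submodule F ((κ → A) → A) :=
  Submodule.span F {f | ∃ l : List (κ ⊕ A), IsMultilinearWord l ∧ f = wordEval l}

lemma map_mem_multilinearFunctions {T : ((κ → A) → A) →ₗ[F] ((ι → A) → A)}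
    (hT : ∀ l : List (κ ⊕ A), IsMultilinearWord l → ∃ l' : List (ι ⊕ A), IsMultilinearWord l' ∧
      ∀ x, T (wordEval l) x = wordEval l' x) {f : (κ → A) → A}
    (hf : f ∈ multilinearFunctions F A κ) : T f ∈ multilinearFunctions F A ι := by
  have h : multilinearFunctions F A κ ≤ (multilinearFunctions F A ι).comap T := by
    refine Submodule.span_le.mpr ?_
    rintro _ ⟨l, hl, rfl⟩
    obtain ⟨l', hl', h⟩ := hT l hl
    exact Submodule.subset_span ⟨l', hl', funext h⟩
  exact h hf

lemma comp_mulAt_mem_multilinearFunctions [DecidableEq κ] {f : (κ → A) → A}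
    (hf : f ∈ multilinearFunctions F A κ) (a : A) (p : κ) :
    (fun x => f (mulAt a p x)) ∈ multilinearFunctions F A κ := by
  refine map_mem_multilinearFunctions (T := LinearMap.funLeft F A (mulAt a p))
    (fun l hl => ?_) hf
  let h (i : κ) : List (κ ⊕ A) := if i = p then [Sum.inr a, Sum.inl i] else [Sum.inl i]
  have hv : ∀ i, wordVars (h i) = [i] := fun i => by
    by_cases hi : i = p <;> simp [h, hi]
  refine ⟨wordSubst h l, hl.subst id (by simp [hv]) (by simp [hv, eq_comm]), fun x => ?_⟩
  rw [wordEval_subst, LinearMap.funLeft_apply]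
  congr 1
  funext i
  by_cases hi : i = p
  · subst hi
    simp [h, mulAt]
  · simp [h, mulAt, hi]

lemma const_mul_mem_multilinearFunctions {f : (κ → A) → A}
    (hf : f ∈ multilinearFunctions F A κ) (a : A) :
    (fun x => a * f x) ∈ multilinearFunctions F A κ := by
  refine map_mem_multilinearFunctions (T := LinearMap.compLeft (LinearMap.mulLeft F a) (κ → A))
    (fun l hl => ⟨Sum.inr a :: l, hl, fun x => ?_⟩) hf
  rw [wordEval_cons_inr]
  rfl

lemma variable_mul_mem_multilinearFunctions {f : (κ → A) → A}
    (hf : f ∈ multilinearFunctions F A κ) :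
    (fun x : Option κ → A => x none * f fun i => x (some i)) ∈
      multilinearFunctions F A (Option κ) := by
  let T : ((κ → A) → A) →ₗ[F] ((Option κ → A) → A) :=
    { toFun := fun f x => x none * f fun i => x (some i)
      map_add' := fun f g => by funext x; exact mul_add _ _ _
      map_smul' := fun c f => by funext x; exact mul_smul_comm _ _ _ }
  refine map_mem_multilinearFunctions (T := T) (fun l hl => ?_) hf
  refine ⟨Sum.inl none :: wordSubst (fun i => [Sum.inl (some i)]) l, ?_, fun x => ?_⟩
  · rw [IsMultilinearWord, wordVars_cons_inl, wordVars_rename]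
    refine ⟨List.nodup_cons.mpr ⟨by simp, hl.1.map (Option.some_injective _)⟩, ?_⟩
    rintro (_ | i) <;> simp [hl.2]
  · rw [wordEval_cons_inl, wordEval_rename]
    rfl

lemma wordEval_mul_wordEval_mem_multilinearFunctions {l : List (ι ⊕ A)} {l' : List (κ ⊕ A)}
    (hl : IsMultilinearWord l) (hl' : IsMultilinearWord l') :
    (fun x => wordEval l (x ∘ Sum.inl) * wordEval l' (x ∘ Sum.inr)) ∈
      multilinearFunctions F A (ι ⊕ κ) := by
  refine Submodule.subset_span ⟨wordSubst (fun i => [Sum.inl (Sum.inl i)]) l ++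
    wordSubst (fun i => [Sum.inl (Sum.inr i)]) l', ⟨?_, ?_⟩, ?_⟩
  · rw [wordVars_append, wordVars_rename, wordVars_rename]
    refine (hl.1.map Sum.inl_injective).append (hl'.1.map Sum.inr_injective) fun p hp hp' => ?_
    obtain ⟨i, -, rfl⟩ := List.mem_map.mp hp
    simp at hp'
  · rintro (i | i) <;> simp [wordVars_rename, hl.2, hl'.2]
  · funext x
    rw [wordEval_append, wordEval_rename, wordEval_rename]

lemma mul_mem_multilinearFunctions {f : (ι → A) → A} {g : (κ → A) → A}
    (hf : f ∈ multilinearFunctions F A ι) (hg : g ∈ multilinearFunctions F A κ) :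
    (fun x => f (x ∘ Sum.inl) * g (x ∘ Sum.inr)) ∈ multilinearFunctions F A (ι ⊕ κ) := by
  induction hf, hg using Submodule.span_induction₂ with
  | mem_mem f g hf hg =>
    obtain ⟨l, hl, rfl⟩ := hf
    obtain ⟨l', hl', rfl⟩ := hg
    exact wordEval_mul_wordEval_mem_multilinearFunctions hl hl'
  | zero_left g _ => simp [← Pi.zero_def]
  | zero_right f _ => simp [← Pi.zero_def]
  | add_left f f' g _ _ _ hf hf' =>
    simp only [Pi.add_apply, add_mul]
    exact add_mem hf hf'
  | add_right f g g' _ _ _ hg hg' =>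
    simp only [Pi.add_apply, mul_add]
    exact add_mem hg hg'
  | smul_left c f g _ _ h =>
    simp only [Pi.smul_apply, smul_mul_assoc]
    exact Submodule.smul_mem _ c h
  | smul_right c f g _ _ h =>
    simp only [Pi.smul_apply, mul_smul_comm]
    exact Submodule.smul_mem _ c h

lemma alternatingEval_mem_multilinearFunctions [Fintype ι] [DecidableEq ι] {l : List (ι ⊕ A)}
    (hl : IsMultilinearWord l) : alternatingEval l ∈ multilinearFunctions F A ι := by
  have h : alternatingEval l = ∑ σ : Equiv.Perm ι, (σ.sign : ℤ) •
      wordEval (wordSubst (fun i => [Sum.inl (σ i)]) l) := by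
    funext x
    rw [Finset.sum_apply]
    refine Finset.sum_congr rfl fun σ _ => ?_
    rw [Pi.smul_apply, wordEval_rename, Units.smul_def]
  have hmem (σ : Equiv.Perm ι) :
      wordEval (wordSubst (fun i => [Sum.inl (σ i)]) l) ∈ multilinearFunctions F A ι :=
    Submodule.subset_span ⟨_, hl.rename σ, rfl⟩
  rw [h]
  exact Submodule.sum_mem _ fun σ _ => zsmul_mem (hmem σ) _

end MultilinearFunctions

section CapelliExchange

variable {F A ι κ : Type*}

lemma viaEmbedding_eq {e : ι ↪ κ} {τ : Equiv.Perm ι} {σ : Equiv.Perm κ}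
    (hin : ∀ i, σ (e i) = e (τ i)) (hout : ∀ p ∉ Set.range e, σ p = p) :
    τ.viaEmbedding e = σ := by
  ext p
  by_cases hp : p ∈ Set.range e
  · obtain ⟨i, rfl⟩ := hp
    rw [Equiv.Perm.viaEmbedding_apply, hin]
  · rw [Equiv.Perm.viaEmbedding_apply_of_notMem _ _ p hp, hout p hp]

variable [Field F] [Ring A] [Algebra F A] [Fintype ι] [DecidableEq ι]

lemma SatisfiesCapelli.sum_viaEmbedding (hA : SatisfiesCapelli A ι) (e : ι ↪ κ)
    {f : (κ → A) → A} (hf : f ∈ multilinearFunctions F A κ) (x : κ → A) :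
    ∑ σ : Equiv.Perm ι, σ.sign • f (x ∘ σ.viaEmbedding e) = 0 := by
  induction hf using Submodule.span_induction generalizing x with
  | zero => simp
  | add f g _ _ hf hg =>
    simp only [Pi.add_apply, smul_add, Finset.sum_add_distrib, hf, hg, add_zero]
  | smul c f _ hf =>
    simp only [Pi.smul_apply, smul_comm _ c, ← Finset.smul_sum, hf, smul_zero]
  | mem f h =>
    obtain ⟨l, hl, rfl⟩ := h
    obtain ⟨l', hl', h⟩ := hl.exists_wordEval_extend e.injective 1 x
    rw [← hA l' hl' fun i => x (e i)]
    refine Finset.sum_congr rfl fun σ _ => ?_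
    rw [h]
    congr 2
    funext p
    by_cases hp : p ∈ Set.range e
    · obtain ⟨i, rfl⟩ := hp
      simp [Equiv.Perm.viaEmbedding_apply, e.injective.extend_apply]
    · rw [Function.extend_apply' _ _ p hp, Function.comp_apply,
        Equiv.Perm.viaEmbedding_apply_of_notMem _ _ p hp]

variable [CharZero F] [DecidableEq κ]

/-- Summing the Capelli identity over the cosets of the stabiliser of a place `p`, a function
alternating in further places `e i` is the sum of its values with `p` exchanged with each of
these. -/
lemma SatisfiesCapelli.exchange (hA : SatisfiesCapelli A (Option ι)) (e : ι ↪ κ) {p : κ}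
    (hp : p ∉ Set.range e) {f : (κ → A) → A} (hf : f ∈ multilinearFunctions F A κ)
    (halt : ∀ (τ : Equiv.Perm ι) (x : κ → A), f (x ∘ τ.viaEmbedding e) = τ.sign • f x)
    (x : κ → A) : f x = ∑ i, f (x ∘ Equiv.swap p (e i)) := by
  let e' : Option ι ↪ κ := e.optionElim p hp
  have hswap (o : Option ι) : (Equiv.swap none o).viaEmbedding e' = Equiv.swap p (e' o) :=
    viaEmbedding_eq (fun o' => e'.injective.swap_apply none o o') fun q hq =>
      Equiv.swap_apply_of_ne_of_ne (fun h => hq ⟨none, h.symm⟩) fun h => hq ⟨o, h.symm⟩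
  have hstab (τ : Equiv.Perm ι) :
      Equiv.Perm.viaEmbedding (Equiv.optionCongr τ) e' = τ.viaEmbedding e := by
    refine viaEmbedding_eq ?_ fun q hq => Equiv.Perm.viaEmbedding_apply_of_notMem _ _ q
      fun ⟨i, hi⟩ => hq ⟨some i, hi⟩
    rintro (_ | i)
    · exact Equiv.Perm.viaEmbedding_apply_of_notMem _ _ p hp
    · exact Equiv.Perm.viaEmbedding_apply _ e i
  have hterm (o : Option ι) (τ : Equiv.Perm ι) :
      (Equiv.Perm.decomposeOption.symm (o, τ)).sign •
        f (x ∘ (Equiv.Perm.decomposeOption.symm (o, τ)).viaEmbedding e') =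
      (Equiv.swap none o).sign • f (x ∘ Equiv.swap p (e' o)) := by
    have hmul : Equiv.Perm.viaEmbedding (Equiv.swap none o * Equiv.optionCongr τ) e' =
        Equiv.swap p (e' o) * τ.viaEmbedding e := by
      rw [← hswap, ← hstab]
      exact map_mul (Equiv.Perm.viaEmbeddingHom e') _ _
    rw [Equiv.Perm.decomposeOption_symm_apply, hmul, Equiv.Perm.coe_mul, ← Function.comp_assoc,
      halt, Equiv.Perm.sign_mul, Equiv.optionCongr_sign, smul_smul, mul_assoc, Int.units_mul_self,
      mul_one]
  have h := hA.sum_viaEmbedding e' hf x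
  rw [← Equiv.sum_comp Equiv.Perm.decomposeOption.symm, Fintype.sum_prod_type] at h
  simp only [hterm, Finset.sum_const, Finset.card_univ, ← Finset.smul_sum] at h
  rw [← Nat.cast_smul_eq_nsmul F, smul_eq_zero_iff_right
    (Nat.cast_ne_zero.mpr Fintype.card_ne_zero), Fintype.sum_option] at h
  have hnone : Equiv.swap p (e' none) = 1 := Equiv.swap_self p
  simp only [Equiv.swap_self, Equiv.Perm.sign_refl, one_smul, hnone, Equiv.Perm.coe_one,
    Function.comp_id, Equiv.Perm.sign_swap (Option.some_ne_none _).symm, Units.neg_smul,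
    Finset.sum_neg_distrib] at h
  exact eq_of_sub_eq_zero ((sub_eq_add_neg _ _).trans h)

end CapelliExchange

section DoublyAlternating

variable {F A ι : Type*} [Field F] [Ring A] [Algebra F A] [Fintype ι] [DecidableEq ι]

variable (F A ι) in
/-- The multilinear functions alternating in each of two sets of variables. -/
def doublyAlternating : Submodule A ((ι ⊕ ι → A) → A) where
  carrier := {f | f ∈ multilinearFunctions F A (ι ⊕ ι) ∧ ∀ (τ : Equiv.Perm ι) (x : ι ⊕ ι → A),
    f (x ∘ Equiv.sumCongr τ (Equiv.refl ι)) = τ.sign • f x ∧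
    f (x ∘ Equiv.sumCongr (Equiv.refl ι) τ) = τ.sign • f x}
  add_mem' := fun hf hg => ⟨Submodule.add_mem _ hf.1 hg.1, fun τ x =>
    ⟨by simp only [Pi.add_apply, smul_add, (hf.2 τ x).1, (hg.2 τ x).1],
      by simp only [Pi.add_apply, smul_add, (hf.2 τ x).2, (hg.2 τ x).2]⟩⟩
  zero_mem' := ⟨Submodule.zero_mem _, fun τ x => by simp⟩
  smul_mem' := fun a f hf => ⟨const_mul_mem_multilinearFunctions hf.1 a, fun τ x =>
    ⟨by simp only [Pi.smul_apply, smul_eq_mul, (hf.2 τ x).1, mul_smul_comm],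
      by simp only [Pi.smul_apply, smul_eq_mul, (hf.2 τ x).2, mul_smul_comm]⟩⟩

lemma mulAt_comp_perm {κ : Type*} [DecidableEq κ] (a : A) (p : κ) (σ : Equiv.Perm κ) (x : κ → A) :
    mulAt a p x ∘ σ = mulAt a (σ.symm p) (x ∘ σ) := by
  rw [mulAt, Function.update_comp_equiv, mulAt, Function.comp_apply, Equiv.apply_symm_apply]

lemma traceAt_mem_doublyAlternating (a : A) {f : (ι ⊕ ι → A) → A}
    (hf : f ∈ doublyAlternating F A ι) :
    traceAt Function.Embedding.inl a f ∈ doublyAlternating F A ι := by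
  refine ⟨?_, fun τ x => ⟨?_, ?_⟩⟩
  · have h : traceAt Function.Embedding.inl a f =
        ∑ i : ι, fun x => f (mulAt a (Sum.inl i) x) := by
      funext x
      rw [Finset.sum_apply]
      rfl
    rw [h]
    exact Submodule.sum_mem _ fun i _ => comp_mulAt_mem_multilinearFunctions hf.1 a _
  · simp only [traceAt, Finset.smul_sum, Function.Embedding.inl_apply]
    rw [← Equiv.sum_comp τ.symm]
    exact Finset.sum_congr rfl fun i _ => by
      rw [← (hf.2 τ _).1, mulAt_comp_perm]
      simp
  · simp only [traceAt, Finset.smul_sum, Function.Embedding.inl_apply]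
    exact Finset.sum_congr rfl fun i _ => by
      rw [← (hf.2 τ _).2, mulAt_comp_perm]
      simp

variable [CharZero F] {f : (ι ⊕ ι → A) → A}

lemma exchange_inr (hA : SatisfiesCapelli A (Option ι)) (hf : f ∈ doublyAlternating F A ι)
    (j : ι) (x : ι ⊕ ι → A) : f x = ∑ i, f (x ∘ Equiv.swap (Sum.inr j) (Sum.inl i)) := by
  refine hA.exchange Function.Embedding.inl (by simp) hf.1 (fun τ x => ?_) x
  rw [← (hf.2 τ x).1, viaEmbedding_eq (σ := Equiv.sumCongr τ (Equiv.refl ι)) (by simp) (by simp)]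

lemma exchange_inl (hA : SatisfiesCapelli A (Option ι)) (hf : f ∈ doublyAlternating F A ι)
    (i : ι) (x : ι ⊕ ι → A) : f x = ∑ j, f (x ∘ Equiv.swap (Sum.inl i) (Sum.inr j)) := by
  refine hA.exchange Function.Embedding.inr (by simp) hf.1 (fun τ x => ?_) x
  rw [← (hf.2 τ x).2, viaEmbedding_eq (σ := Equiv.sumCongr (Equiv.refl ι) τ) (by simp) (by simp)]

lemma exchangeSum_nil (hA : SatisfiesCapelli A (Option ι)) (hf : f ∈ doublyAlternating F A ι)
    (z : A) (x : ι ⊕ ι → A) : exchangeSum Function.Embedding.inl [] z f x = z * f x := by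
  let e : ι ↪ Option (ι ⊕ ι) := Function.Embedding.inl.trans Function.Embedding.some
  let y : Option (ι ⊕ ι) → A := fun o => o.elim z x
  have halt (τ : Equiv.Perm ι) (y : Option (ι ⊕ ι) → A) :
      (y ∘ τ.viaEmbedding e) none * f (fun p => (y ∘ τ.viaEmbedding e) (some p)) =
        τ.sign • (y none * f fun p => y (some p)) := by
    rw [viaEmbedding_eq (σ := Equiv.optionCongr (Equiv.sumCongr τ (Equiv.refl ι)))
      (by simp [e]) (by rintro (_ | _ | _) <;> simp [e]), ← mul_smul_comm, ← (hf.2 τ _).1]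
    rfl
  have h := hA.exchange e (p := none) (by simp [e])
    (variable_mul_mem_multilinearFunctions hf.1) halt y
  refine ((h : z * f x = _).trans (Finset.sum_congr rfl fun i _ => ?_)).symm
  have hy : (fun p => (y ∘ Equiv.swap none (e i)) (some p)) = Function.update x (Sum.inl i) z := by
    funext p
    by_cases hp : p = Sum.inl i
    · subst hp
      simp [y, e]
    · rw [Function.update_of_ne hp]
      exact congrArg y (Equiv.swap_apply_of_ne_of_ne (Option.some_ne_none _)
        fun h => hp (Option.some_inj.mp h))
  rw [hy, Function.comp_apply, Equiv.swap_apply_left]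
  rfl

/-- Comparing the exchange formulas for the summands of a trace and for the trace itself. -/
lemma sum_mulAt_inr_comp_swap (hA : SatisfiesCapelli A (Option ι))
    (hf : f ∈ doublyAlternating F A ι) (a : A) (j : ι) (x : ι ⊕ ι → A) :
    ∑ i, f (mulAt a (Sum.inr j) (x ∘ Equiv.swap (Sum.inr j) (Sum.inl i))) =
      f (mulAt a (Sum.inr j) x) := by
  let s (i : ι) : Equiv.Perm (ι ⊕ ι) := Equiv.swap (Sum.inr j) (Sum.inl i)
  have hsummand (p) : f (mulAt a p x) = ∑ k, f (mulAt a (s k p) (x ∘ s k)) := by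
    simp only [exchange_inr hA hf j (mulAt a p x), mulAt_comp_perm, Equiv.symm_swap, s]
  have htrace : ∑ i, ∑ k, f (mulAt a (s k (Sum.inl i)) (x ∘ s k)) =
      ∑ i, ∑ k, f (mulAt a (Sum.inl i) (x ∘ s k)) := by
    rw [Finset.sum_comm (f := fun i k => f (mulAt a (Sum.inl i) (x ∘ s k)))]
    refine (Finset.sum_congr rfl fun i _ => (hsummand (Sum.inl i)).symm).trans ?_
    exact exchange_inr hA (traceAt_mem_doublyAlternating a hf) j x
  have hdiag (i : ι) : ∑ k, (f (mulAt a (s k (Sum.inl i)) (x ∘ s k)) -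
      f (mulAt a (Sum.inl i) (x ∘ s k))) =
      f (mulAt a (Sum.inr j) (x ∘ s i)) - f (mulAt a (Sum.inl i) (x ∘ s i)) := by
    rw [Fintype.sum_eq_single i fun k hk => ?_, Equiv.swap_apply_right]
    rw [Equiv.swap_apply_of_ne_of_ne (by simp) (by simpa using hk.symm), sub_self]
  rw [← sub_eq_zero] at htrace
  simp only [← Finset.sum_sub_distrib, hdiag] at htrace
  rw [Finset.sum_sub_distrib, sub_eq_zero] at htrace
  simpa only [hsummand (Sum.inr j), s, Equiv.swap_apply_left] using htrace

lemma traceAt_inl_eq_traceAt_inr (hA : SatisfiesCapelli A (Option ι))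
    (hf : f ∈ doublyAlternating F A ι) (a : A) :
    traceAt Function.Embedding.inl a f = traceAt Function.Embedding.inr a f := by
  funext x
  calc ∑ i, f (mulAt a (Sum.inl i) x)
    _ = ∑ i, ∑ j, f (mulAt a (Sum.inr j) (x ∘ Equiv.swap (Sum.inr j) (Sum.inl i))) := by
      refine Finset.sum_congr rfl fun i _ => (exchange_inl hA hf i _).trans ?_
      refine Finset.sum_congr rfl fun j _ => ?_
      rw [mulAt_comp_perm, Equiv.symm_swap, Equiv.swap_apply_left, Equiv.swap_comm]
    _ = ∑ j, ∑ i, f (mulAt a (Sum.inr j) (x ∘ Equiv.swap (Sum.inr j) (Sum.inl i))) :=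
      Finset.sum_comm
    _ = ∑ j, f (mulAt a (Sum.inr j) x) :=
      Finset.sum_congr rfl fun j _ => sum_mulAt_inr_comp_swap hA hf a j x

lemma traceAt_comm (hA : SatisfiesCapelli A (Option ι)) (hf : f ∈ doublyAlternating F A ι)
    (a b : A) : traceAt Function.Embedding.inl a (traceAt Function.Embedding.inl b f) =
      traceAt Function.Embedding.inl b (traceAt Function.Embedding.inl a f) := by
  rw [traceAt_inl_eq_traceAt_inr hA hf b,
    traceAt_inl_eq_traceAt_inr hA (traceAt_mem_doublyAlternating a hf) b]
  funext x
  simp only [traceAt]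
  rw [Finset.sum_comm]
  refine Finset.sum_congr rfl fun i _ => Finset.sum_congr rfl fun j _ => ?_
  rw [mulAt_comm (by simp)]

end DoublyAlternating

section ExchangeLead

lemma leftMultiples_append {P : Type*} [Mul P] (w : P) (S T : List P) :
    leftMultiples w (S ++ T) =
      (leftMultiples w S).map (· ++ T) ++ (leftMultiples w T).map (S ++ ·) := by
  induction S with
  | nil => simp [leftMultiples]
  | cons s S ih => simp [leftMultiples, ih, Function.comp_def]

lemma leftMultiples_map {P Q : Type*} [Mul P] [Mul Q] {φ : P → Q}
    (hφ : ∀ a b, φ (a * b) = φ a * φ b) (w : P) (S : List P) :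
    leftMultiples (φ w) (S.map φ) = (leftMultiples w S).map (List.map φ) := by
  induction S with
  | nil => simp [leftMultiples]
  | cons s S ih => simp [leftMultiples, ih, hφ, Function.comp_def]

lemma length_leftMultiples {P : Type*} [Mul P] (w : P) (S : List P) :
    (leftMultiples w S).length = S.length := by
  induction S with
  | nil => simp [leftMultiples]
  | cons s S ih => simp [leftMultiples, ih]

lemma length_of_mem_leftMultiples {P : Type*} [Mul P] {w : P} {S S' : List P}
    (h : S' ∈ leftMultiples w S) : S'.length = S.length := by
  induction S generalizing S' with
  | nil => simp [leftMultiples] at h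
  | cons s S ih =>
    obtain rfl | ⟨T, hT, rfl⟩ := by simpa [leftMultiples] using h
    · simp
    · simp [ih hT]

lemma prod_of_mem_leftMultiples {P : Type*} [CommMonoid P] {w : P} {S S' : List P}
    (h : S' ∈ leftMultiples w S) : S'.prod = w * S.prod := by
  induction S generalizing S' with
  | nil => simp [leftMultiples] at h
  | cons s S ih =>
    obtain rfl | ⟨T, hT, rfl⟩ := by simpa [leftMultiples] using h
    · simp [mul_assoc]
    · simp [ih hT, mul_left_comm]

lemma sum_map_of_mem_leftMultiples {P M : Type*} [Mul P] [AddCommMonoid M] {δ : P → M}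
    (hδ : ∀ a b, δ (a * b) = δ a + δ b) {w : P} {S S' : List P}
    (h : S' ∈ leftMultiples w S) : (S'.map δ).sum = δ w + (S.map δ).sum := by
  induction S generalizing S' with
  | nil => simp [leftMultiples] at h
  | cons s S ih =>
    obtain rfl | ⟨T, hT, rfl⟩ := by simpa [leftMultiples] using h
    · simp [hδ, add_assoc]
    · simp [ih hT, add_left_comm]

lemma forall_mem_of_mem_leftMultiples {P : Type*} [Mul P] {p : P → Prop} {w : P}
    (hw : ∀ s, p s → p (w * s)) {S S' : List P} (hS : ∀ s ∈ S, p s)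
    (h : S' ∈ leftMultiples w S) : ∀ s ∈ S', p s := by
  induction S generalizing S' with
  | nil => simp [leftMultiples] at h
  | cons s S ih =>
    simp only [List.forall_mem_cons] at hS
    obtain rfl | ⟨T, hT, rfl⟩ := by simpa [leftMultiples] using h
    · simpa using ⟨hw s hS.1, hS.2⟩
    · simpa using ⟨hS.1, ih hS.2 hT⟩

/-- The part of the recursion `exchangeSum_cons` which involves no traces, the sum over an empty
list being replaced by its external factor `z`. -/
def exchangeLead {R : Type*} [Ring R] : ℕ → List R → R → R
  | 0, [], z => z
  | 0, _ :: _, _ => 0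
  | _ + 1, [], _ => 0
  | k + 1, w :: S, z =>
    -((leftMultiples w S).map fun S' => exchangeLead k S' z).sum - exchangeLead k S (w * z)

lemma map_exchangeLead {R R' : Type*} [Ring R] [Ring R'] (φ : R →+* R') (k : ℕ) (S : List R)
    (z : R) : φ (exchangeLead k S z) = exchangeLead k (S.map φ) (φ z) := by
  induction k generalizing S z with
  | zero => cases S <;> simp [exchangeLead]
  | succ k ih =>
    cases S with
    | nil => simp [exchangeLead]
    | cons w S =>
      simp only [exchangeLead, List.map_cons, leftMultiples_map (map_mul φ), map_sub, map_neg,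
        map_list_sum, ih, map_mul, List.map_map, Function.comp_def]

lemma exchangeLead_map_commMonoid {P R : Type*} [CommMonoid P] [Ring R] (φ : P →* R) (S : List P)
    (z : P) (k : ℕ) (hk : S.length = k) :
    exchangeLead k (S.map φ) (φ z) = ((-1) ^ k * (k.factorial : ℤ)) • φ (S.prod * z) := by
  induction k generalizing S z with
  | zero =>
    obtain rfl := List.length_eq_zero_iff.mp hk
    simp [exchangeLead]
  | succ k ih =>
    obtain ⟨w, S, rfl⟩ := List.exists_cons_of_length_eq_add_one hk
    have hk : S.length = k := by simpa using hk
    rw [List.map_cons, exchangeLead, leftMultiples_map (map_mul φ), List.map_map, ← map_mul,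
      ih _ _ hk]
    have hlists : (leftMultiples w S).map ((fun S' => exchangeLead k S' (φ z)) ∘ List.map φ) =
        List.replicate k (((-1) ^ k * (k.factorial : ℤ)) • φ ((w :: S).prod * z)) := by
      rw [List.eq_replicate_iff]
      refine ⟨by simp [length_leftMultiples, hk], ?_⟩
      simp only [List.mem_map, Function.comp_apply]
      rintro _ ⟨T, hT, rfl⟩
      rw [ih _ _ ((length_of_mem_leftMultiples hT).trans hk)]
      rw [prod_of_mem_leftMultiples hT, List.prod_cons]
    rw [hlists, List.sum_replicate, List.prod_cons, mul_left_comm S.prod w z, mul_assoc w S.prod z,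
      ← natCast_zsmul, smul_smul, ← neg_smul, ← sub_smul]
    congr 1
    rw [Nat.factorial_succ]
    push_cast
    ring

variable {F R B : Type*} [Field F] [Ring R] [Algebra F R] [AddCommGroup B] [Module F B]

variable (F) in
/-- Linearity of a function of lists in every entry of its argument. -/
def IsSlotLinear (g : List R → B) : Prop :=
  ∀ (S T : List R) (p q : R) (c : F),
    g (S ++ (p + c • q) :: T) = g (S ++ p :: T) + c • g (S ++ q :: T)

lemma list_sum_map_add_smul {ι : Type*} (l : List ι) (u v : ι → B) (c : F) :
    (l.map fun i => u i + c • v i).sum = (l.map u).sum + c • (l.map v).sum := by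
  rw [List.sum_map_add, List.smul_sum, List.map_map]
  rfl

lemma IsSlotLinear.sum_leftMultiples_left {g : List R → B} (hg : IsSlotLinear F g) (w v : R)
    (c : F) (S : List R) : ((leftMultiples (w + c • v) S).map g).sum =
      ((leftMultiples w S).map g).sum + c • ((leftMultiples v S).map g).sum := by
  induction S generalizing g with
  | nil => simp [leftMultiples]
  | cons s S ih =>
    have h := ih (g := fun S => g (s :: S)) fun S T p q c => hg (s :: S) T p q c
    have h' := hg [] S (w * s) (v * s) c
    simp only [List.nil_append] at h'
    simp only [leftMultiples, List.map_cons, List.sum_cons, List.map_map, Function.comp_def, h,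
      add_mul, smul_mul_assoc, h', smul_add]
    abel

lemma IsSlotLinear.sum_leftMultiples {g : List R → B} (hg : IsSlotLinear F g) (w : R) :
    IsSlotLinear F fun S => ((leftMultiples w S).map g).sum := by
  intro S T p q c
  have hleft : ∀ U, g (U ++ (p + c • q) :: T) = g (U ++ p :: T) + c • g (U ++ q :: T) :=
    fun U => hg U T p q c
  have hright : ∀ U, g (S ++ (p + c • q) :: U) = g (S ++ p :: U) + c • g (S ++ q :: U) :=
    fun U => hg S U p q c
  have hmul := hg S T (w * p) (w * q) c
  simp only [leftMultiples_append, leftMultiples, List.map_cons, List.map_append, List.sum_append,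
    List.sum_cons, List.map_map, Function.comp_def, hleft, hright, list_sum_map_add_smul,
    mul_add, mul_smul_comm, hmul, smul_add]
  abel

lemma exchangeLead_add_smul (k : ℕ) (S : List R) (z z' : R) (c : F) :
    exchangeLead k S (z + c • z') = exchangeLead k S z + c • exchangeLead k S z' := by
  induction k generalizing S z z' with
  | zero => cases S <;> simp [exchangeLead]
  | succ k ih =>
    cases S with
    | nil => simp [exchangeLead]
    | cons w S =>
      have h := list_sum_map_add_smul (leftMultiples w S) (exchangeLead k · z)
        (exchangeLead k · z') c
      simp only [exchangeLead, mul_add, mul_smul_comm, ih, h, smul_sub, smul_neg]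
      abel

lemma isSlotLinear_exchangeLead (k : ℕ) (z : R) :
    IsSlotLinear F fun S => exchangeLead k S z := by
  induction k generalizing z with
  | zero => rintro (_ | _) T p q c <;> simp [exchangeLead]
  | succ k ih =>
    rintro (_ | ⟨w, S⟩) T p q c
    · simp only [List.nil_append, exchangeLead, (ih z).sum_leftMultiples_left, add_mul,
        smul_mul_assoc, exchangeLead_add_smul, smul_sub, smul_neg]
      abel
    · have hsum := (ih z).sum_leftMultiples w S T p q c
      have hlast := ih (w * z) S T p q c
      simp only at hsum hlast
      simp only [List.cons_append, exchangeLead, hsum, hlast, smul_sub, smul_neg]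
      abel

lemma IsSlotLinear.mem_of_forall_mem_span {g : List R → B} (hg : IsSlotLinear F g)
    {J : Submodule F B} {T : Set R} {n : ℕ}
    (h : ∀ S : List R, S.length = n → (∀ s ∈ S, s ∈ T) → g S ∈ J) (S : List R) (hn : S.length = n)
    (hS : ∀ s ∈ S, s ∈ Submodule.span F T) : g S ∈ J := by
  suffices H : ∀ S₁ : List R, (∀ s ∈ S₁, s ∈ T) → S₁.length + S.length = n → g (S₁ ++ S) ∈ J by
    simpa using H [] (by simp) (by simpa using hn)
  clear hn
  induction S with
  | nil => exact fun S₁ h₁ hl => by simpa using h S₁ (by simpa using hl) h₁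
  | cons s S ih =>
    intro S₁ h₁ hl
    simp only [List.forall_mem_cons] at hS
    have hadd : ∀ p q, g (S₁ ++ (p + q) :: S) = g (S₁ ++ p :: S) + g (S₁ ++ q :: S) := fun p q => by
      simpa using hg S₁ S p q 1
    have hz : g (S₁ ++ 0 :: S) = 0 := by simpa using hadd 0 0
    obtain ⟨hs, hS⟩ := hS
    induction hs using Submodule.span_induction with
    | mem s hs =>
      have := ih hS (S₁ ++ [s]) (by simpa [or_imp, forall_and] using ⟨h₁, hs⟩)
        (by simpa [add_assoc, add_comm 1] using hl)
      simpa using this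
    | zero => simp [hz]
    | add p q _ _ hp hq =>
      rw [hadd]
      exact add_mem (hp (by simpa using hl)) (hq (by simpa using hl))
    | smul c p _ hp =>
      have := hg S₁ S 0 p c
      rw [zero_add, hz, zero_add] at this
      rw [this]
      exact J.smul_mem c (hp (by simpa using hl))

lemma exchangeLead_replicate (x : R) (n : ℕ) :
    exchangeLead n (List.replicate n x) 1 = ((-1) ^ n * (n.factorial : ℤ)) • x ^ n := by
  have h := exchangeLead_map_commMonoid (powersHom R x)
    (List.replicate n (Multiplicative.ofAdd (1 : ℕ))) 1 n (by simp)
  rw [List.map_replicate, map_one (powersHom R x)] at h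
  simpa only [powersHom_apply, toAdd_ofAdd, pow_one, List.prod_replicate, mul_one, toAdd_pow,
    smul_eq_mul] using h

/-- On a constant list the leading part is a multiple of a power, so this is a polarization. -/
lemma pow_mem_of_exchangeLead_mem [CharZero F] {J : Submodule F R} {T : Set R} {n : ℕ}
    (h : ∀ S : List R, S.length = n → (∀ s ∈ S, s ∈ T) → exchangeLead n S 1 ∈ J) {x : R}
    (hx : x ∈ Submodule.span F T) : x ^ n ∈ J := by
  have hmem := (isSlotLinear_exchangeLead (F := F) n 1).mem_of_forall_mem_span h
    (List.replicate n x) (by simp) fun s hs => by rwa [List.eq_of_mem_replicate hs]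
  rw [exchangeLead_replicate, ← Int.cast_smul_eq_zsmul F] at hmem
  refine (J.smul_mem_iff ?_).mp hmem
  exact Int.cast_ne_zero.mpr (mul_ne_zero (by simp) (by exact_mod_cast n.factorial_ne_zero))

end ExchangeLead

section FreeAlgebraIdeals

variable {F X : Type*} [CommRing F]

lemma exists_twoSidedIdeal_mem_iff (J : Submodule F (FreeAlgebra F X))
    (hl : ∀ x, ∀ p ∈ J, FreeAlgebra.ι F x * p ∈ J) (hr : ∀ x, ∀ p ∈ J, p * FreeAlgebra.ι F x ∈ J) :
    ∃ I : TwoSidedIdeal (FreeAlgebra F X), ∀ p, p ∈ I ↔ p ∈ J := by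
  have hleft : ∀ a, ∀ p ∈ J, a * p ∈ J := fun a => by
    induction a using FreeAlgebra.induction with
    | grade0 c => exact fun p hp => by rw [← Algebra.smul_def]; exact J.smul_mem c hp
    | grade1 x => exact hl x
    | mul a b ha hb => exact fun p hp => by rw [mul_assoc]; exact ha _ (hb _ hp)
    | add a b ha hb => exact fun p hp => by rw [add_mul]; exact add_mem (ha _ hp) (hb _ hp)
  have hright : ∀ a, ∀ p ∈ J, p * a ∈ J := fun a => by
    induction a using FreeAlgebra.induction with
    | grade0 c =>
      exact fun p hp => by rw [← Algebra.commutes, ← Algebra.smul_def]; exact J.smul_mem c hp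
    | grade1 x => exact hr x
    | mul a b ha hb => exact fun p hp => by rw [← mul_assoc]; exact hb _ (ha _ hp)
    | add a b ha hb => exact fun p hp => by rw [mul_add]; exact add_mem (ha _ hp) (hb _ hp)
  exact ⟨.mk' J J.zero_mem J.add_mem J.neg_mem (hleft _ _) (hright _ _), fun p => by simp⟩

lemma exists_twoSidedIdeal_mem_iff_span_words (F : Type*) [CommRing F] (X : Type*) :
    ∃ I : TwoSidedIdeal (FreeAlgebra F X), ∀ p, p ∈ I ↔
      p ∈ Submodule.span F (FreeMonoid.lift (FreeAlgebra.ι F) '' {u : FreeMonoid X | u ≠ 1}) := by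
  refine exists_twoSidedIdeal_mem_iff _ (fun x p hp => ?_) (fun x p hp => ?_)
  · induction hp using Submodule.span_induction with
    | mem p hp =>
      obtain ⟨u, -, rfl⟩ := hp
      refine Submodule.subset_span ⟨FreeMonoid.of x * u, fun h => ?_, by simp⟩
      simpa [FreeMonoid.length_mul] using congrArg FreeMonoid.length h
    | zero => simp
    | add p q _ _ hp hq => rw [mul_add]; exact add_mem hp hq
    | smul c p _ hp => rw [mul_smul_comm]; exact Submodule.smul_mem _ c hp
  · induction hp using Submodule.span_induction with
    | mem p hp =>
      obtain ⟨u, -, rfl⟩ := hp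
      refine Submodule.subset_span ⟨u * FreeMonoid.of x, fun h => ?_, by simp⟩
      simpa [FreeMonoid.length_mul] using congrArg FreeMonoid.length h
    | zero => simp
    | add p q _ _ hp hq => rw [add_mul]; exact add_mem hp hq
    | smul c p _ hp => rw [smul_mul_assoc]; exact Submodule.smul_mem _ c hp

end FreeAlgebraIdeals

section WordSpan

variable {K E X : Type*} [CommRing K] [Ring E] [Algebra K E]

variable (K) in
/-- The span of the values of the words of length less than `ℓ`. -/
def wordSpan (Λ : FreeMonoid X →* E) (ℓ : ℕ) : Submodule K E :=
  Submodule.span K (Λ '' {u | u.length < ℓ})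

lemma mem_wordSpan {Λ : FreeMonoid X →* E} {ℓ : ℕ} {u : FreeMonoid X} (h : u.length < ℓ) :
    Λ u ∈ wordSpan K Λ ℓ :=
  Submodule.subset_span ⟨u, h, rfl⟩

lemma wordSpan_mono {Λ : FreeMonoid X →* E} {k ℓ : ℕ} (h : k ≤ ℓ) :
    wordSpan K Λ k ≤ wordSpan K Λ ℓ :=
  Submodule.span_mono (Set.image_mono fun _ hu => lt_of_lt_of_le hu h)

lemma mul_mem_wordSpan {Λ : FreeMonoid X →* E} (u : FreeMonoid X) {ℓ : ℕ} {v : E}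
    (hv : v ∈ wordSpan K Λ ℓ) : Λ u * v ∈ wordSpan K Λ (u.length + ℓ) := by
  induction hv using Submodule.span_induction with
  | mem v hv =>
    obtain ⟨w, hw, rfl⟩ := hv
    rw [← map_mul]
    exact mem_wordSpan (by rw [FreeMonoid.length_mul]; exact Nat.add_lt_add_left hw _)
  | zero => simp
  | add v w _ _ hv hw => rw [mul_add]; exact add_mem hv hw
  | smul c v _ hv => rw [mul_smul_comm]; exact Submodule.smul_mem _ c hv

lemma wordSpan_mul_mem {Λ : FreeMonoid X →* E} (u : FreeMonoid X) {ℓ : ℕ} {v : E}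
    (hv : v ∈ wordSpan K Λ ℓ) : v * Λ u ∈ wordSpan K Λ (ℓ + u.length) := by
  induction hv using Submodule.span_induction with
  | mem v hv =>
    obtain ⟨w, hw, rfl⟩ := hv
    rw [← map_mul]
    exact mem_wordSpan (by rw [FreeMonoid.length_mul]; exact Nat.add_lt_add_right hw _)
  | zero => simp
  | add v w _ _ hv hw => rw [add_mul]; exact add_mem hv hw
  | smul c v _ hv => rw [smul_mul_assoc]; exact Submodule.smul_mem _ c hv

lemma exchangeLead_mem_wordSpan (Λ : FreeMonoid X →* E) (k : ℕ) (S : List (FreeMonoid X))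
    (z : FreeMonoid X) : exchangeLead k (S.map Λ) (Λ z) ∈
      wordSpan K Λ ((S.map FreeMonoid.length).sum + z.length + 1) := by
  induction k generalizing S z with
  | zero =>
    cases S with
    | nil => exact mem_wordSpan (by simp)
    | cons w S => simp [exchangeLead]
  | succ k ih =>
    cases S with
    | nil => simp [exchangeLead]
    | cons w S =>
      rw [List.map_cons (f := Λ), exchangeLead, leftMultiples_map (map_mul Λ), ← map_mul]
      refine sub_mem (neg_mem (list_sum_mem ?_)) ?_
      · simp only [List.mem_map, List.map_map]
        rintro _ ⟨T, hT, rfl⟩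
        have := sum_map_of_mem_leftMultiples (δ := FreeMonoid.length) FreeMonoid.length_mul hT
        rw [List.map_cons, List.sum_cons, ← this]
        exact ih T z
      · convert ih S (w * z) using 2
        simp only [List.map_cons, List.sum_cons, FreeMonoid.length_mul]
        ring

/-- The values of the words, with their lengths recorded as degrees. -/
noncomputable def lengthMonomial (Λ : FreeMonoid X →* E) : FreeMonoid X →* Polynomial E where
  toFun u := Polynomial.monomial u.length (Λ u)
  map_one' := by simp
  map_mul' u v := by simp [Polynomial.monomial_mul_monomial, FreeMonoid.length_mul]

lemma exchangeLead_lengthMonomial (Λ : FreeMonoid X →* E) (k : ℕ) (S : List (FreeMonoid X))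
    (z : FreeMonoid X) : exchangeLead k (S.map (lengthMonomial Λ)) (lengthMonomial Λ z) =
      Polynomial.monomial ((S.map FreeMonoid.length).sum + z.length)
        (exchangeLead k (S.map Λ) (Λ z)) := by
  induction k generalizing S z with
  | zero => cases S <;> simp [exchangeLead, lengthMonomial]
  | succ k ih =>
    cases S with
    | nil => simp [exchangeLead]
    | cons w S =>
      have hlists : ∀ T ∈ leftMultiples w S,
          exchangeLead k (T.map (lengthMonomial Λ)) (lengthMonomial Λ z) =
          Polynomial.monomial (((w :: S).map FreeMonoid.length).sum + z.length)
            (exchangeLead k (T.map Λ) (Λ z)) := fun T hT => by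
        have := sum_map_of_mem_leftMultiples (δ := FreeMonoid.length) FreeMonoid.length_mul hT
        rw [ih, this, List.map_cons, List.sum_cons]
      have hlength : (S.map FreeMonoid.length).sum + (w * z).length =
          ((w :: S).map FreeMonoid.length).sum + z.length := by
        simp only [List.map_cons, List.sum_cons, FreeMonoid.length_mul]
        ring
      rw [List.map_cons, exchangeLead, leftMultiples_map (map_mul (lengthMonomial Λ)), ← map_mul,
        ih, hlength, List.map_map, Function.comp_def, List.map_congr_left hlists,
        List.map_cons (f := Λ), exchangeLead, leftMultiples_map (map_mul Λ), ← map_mul,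
        map_sub, map_neg, map_list_sum, List.map_map, List.map_map]
      rfl

variable {F : Type*} [Field F] [Algebra F K] [Algebra F E] [IsScalarTower F K E]

variable (F) in
/-- The linear extension of `lengthMonomial` to polynomials in noncommuting variables. -/
noncomputable def lengthGrading (Λ : FreeMonoid X →* E) : FreeAlgebra F X →ₐ[F] Polynomial E :=
  FreeAlgebra.lift F fun x => lengthMonomial Λ (FreeMonoid.of x)

lemma lengthGrading_lift (Λ : FreeMonoid X →* E) (u : FreeMonoid X) :
    lengthGrading F Λ (FreeMonoid.lift (FreeAlgebra.ι F) u) = lengthMonomial Λ u := by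
  have h : (lengthGrading F Λ : FreeAlgebra F X →* Polynomial E).comp
      (FreeMonoid.lift (FreeAlgebra.ι F)) = lengthMonomial Λ :=
    FreeMonoid.hom_eq fun x => by simp [lengthGrading]
  exact DFunLike.congr_fun h u

variable (K F) in
/-- The polynomials whose homogeneous components evaluate to combinations of shorter words. -/
noncomputable def shorteningSubmodule (Λ : FreeMonoid X →* E) :
    Submodule F (FreeAlgebra F X) where
  carrier := {p | ∀ ℓ, (lengthGrading F Λ p).coeff ℓ ∈ wordSpan K Λ ℓ}
  zero_mem' ℓ := by simp
  add_mem' hp hq ℓ := by rw [map_add, Polynomial.coeff_add]; exact add_mem (hp ℓ) (hq ℓ)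
  smul_mem' c p hp ℓ := by
    rw [map_smul, Polynomial.coeff_smul]
    exact Submodule.smul_of_tower_mem _ c (hp ℓ)

lemma exists_twoSidedIdeal_mem_iff_shorteningSubmodule (Λ : FreeMonoid X →* E) :
    ∃ I : TwoSidedIdeal (FreeAlgebra F X), ∀ p, p ∈ I ↔ p ∈ shorteningSubmodule K F Λ := by
  refine exists_twoSidedIdeal_mem_iff _ (fun x p hp ℓ => ?_) (fun x p hp ℓ => ?_)
  · have hx : lengthGrading F Λ (FreeAlgebra.ι F x * p) =
        Polynomial.monomial 1 (Λ (FreeMonoid.of x)) * lengthGrading F Λ p := by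
      simp [lengthGrading, lengthMonomial]
    rw [hx, ← Polynomial.C_mul_X_eq_monomial, mul_assoc, Polynomial.coeff_C_mul]
    cases ℓ with
    | zero => simp
    | succ ℓ =>
      rw [Polynomial.coeff_X_mul, add_comm ℓ]
      exact mul_mem_wordSpan (FreeMonoid.of x) (hp ℓ)
  · have hx : lengthGrading F Λ (p * FreeAlgebra.ι F x) =
        lengthGrading F Λ p * Polynomial.monomial 1 (Λ (FreeMonoid.of x)) := by
      simp [lengthGrading, lengthMonomial]
    rw [hx, ← Polynomial.C_mul_X_eq_monomial, ← mul_assoc]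
    cases ℓ with
    | zero => simp
    | succ ℓ =>
      rw [Polynomial.coeff_mul_X, Polynomial.coeff_mul_C]
      exact wordSpan_mul_mem (FreeMonoid.of x) (hp ℓ)

lemma exchangeLead_mem_shorteningSubmodule {Λ : FreeMonoid X →* E} {n : ℕ}
    {S : List (FreeMonoid X)}
    (h : exchangeLead n (S.map Λ) 1 ∈ wordSpan K Λ (S.map FreeMonoid.length).sum) :
    exchangeLead n (S.map (FreeMonoid.lift (FreeAlgebra.ι F))) 1 ∈
      shorteningSubmodule K F Λ := by
  intro ℓ
  have hmap := map_exchangeLead (lengthGrading F Λ : FreeAlgebra F X →+* Polynomial E) n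
    (S.map (FreeMonoid.lift (FreeAlgebra.ι F))) 1
  have hlift : lengthGrading F Λ ∘ FreeMonoid.lift (FreeAlgebra.ι F) = lengthMonomial Λ :=
    funext (lengthGrading_lift Λ)
  simp only [RingHom.coe_coe, List.map_map, hlift] at hmap
  rw [hmap, map_one, ← map_one (lengthMonomial Λ), exchangeLead_lengthMonomial,
    Polynomial.coeff_monomial, map_one]
  split_ifs with hℓ
  · simpa [← hℓ] using h
  · exact zero_mem _

lemma exists_mem_wordSpan_length (F : Type*) [Field F] [CharZero F] [Algebra F K] [Algebra F E]
    [IsScalarTower F K E] {Λ : FreeMonoid X →* E} {n : ℕ}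
    (h : ∀ S : List (FreeMonoid X), S.length = n → (∀ u ∈ S, u ≠ 1) →
      exchangeLead n (S.map Λ) 1 ∈ wordSpan K Λ (S.map FreeMonoid.length).sum) :
    ∃ N, ∀ u : FreeMonoid X, N ≤ u.length → Λ u ∈ wordSpan K Λ u.length := by
  obtain ⟨S, hS⟩ := exists_twoSidedIdeal_mem_iff_span_words F X
  obtain ⟨J, hJ⟩ := exists_twoSidedIdeal_mem_iff_shorteningSubmodule (F := F) (K := K) Λ
  have hpow : ∀ p ∈ S, p ^ n ∈ J := fun p hp => by
    refine (hJ _).mpr (pow_mem_of_exchangeLead_mem (fun T hT hwords => ?_) ((hS p).mp hp))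
    choose! u hu using hwords
    have hTu : T = (T.map u).map (FreeMonoid.lift (FreeAlgebra.ι F)) := by
      rw [List.map_map]
      exact (List.map_id T).symm.trans (List.map_congr_left fun s hs => (hu s hs).2.symm)
    rw [hTu]
    refine exchangeLead_mem_shorteningSubmodule (h _ (by simpa using hT) ?_)
    exact List.forall_mem_map.mpr fun s hs => (hu s hs).1
  obtain ⟨N, hN⟩ := exists_prod_mem_of_pow_mem F n hpow
  refine ⟨N, fun u hu => ?_⟩
  have hmem := (hJ _).mp (hN (u.toList.map (FreeAlgebra.ι F)) ((List.length_map _).symm ▸ hu) ?_)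
  · rw [← FreeMonoid.lift_apply] at hmem
    simpa [lengthGrading_lift, lengthMonomial] using hmem u.length
  · simp only [List.forall_mem_map, hS]
    exact fun x _ => Submodule.subset_span ⟨FreeMonoid.of x, FreeMonoid.of_ne_one x, by simp⟩

end WordSpan

section ModulesOverWords

variable {F K E : Type*} [Field F] [CommRing K] [Algebra F K] [Ring E] [Algebra K E] [Algebra F E]
  [IsScalarTower F K E]

/-- The elements of `B` act on the span of `v` by matrices over the commutative ring `K`. -/
lemma isPolyIdentity_of_mul_mem_span [Infinite F] {Y ι : Type*} [Fintype ι] [DecidableEq ι]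
    {f : FreeAlgebra F Y} (hf : IsPolyIdentity (Matrix ι ι F) f) {B : Subalgebra F E} {v : ι → E}
    (hone : 1 ∈ Submodule.span K (Set.range v))
    (hv : ∀ b ∈ B, ∀ i, b * v i ∈ Submodule.span K (Set.range v)) : IsPolyIdentity B f := by
  intro φ
  simp only [Submodule.mem_span_range_iff_exists_fun] at hv
  choose! m hm using hv
  let ψ : FreeAlgebra F Y →ₐ[F] Matrix ι ι K :=
    FreeAlgebra.lift F fun y => Matrix.of fun i j => m (φ (FreeAlgebra.ι F y)) j i
  have hψ (g : FreeAlgebra F Y) : ∀ j, (φ g : E) * v j = ∑ i, ψ g i j • v i := by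
    induction g using FreeAlgebra.induction with
    | grade0 r =>
      intro j
      simp [Matrix.algebraMap_eq_diagonal, Matrix.diagonal_apply, ite_smul, ← Algebra.smul_def]
    | grade1 y => exact fun j => by simp [ψ, hm]
    | mul a b ha hb =>
      intro j
      simp only [map_mul, MulMemClass.coe_mul, mul_assoc, hb, Finset.mul_sum, mul_smul_comm, ha,
        Matrix.mul_apply, Finset.smul_sum, Finset.sum_smul, smul_smul]
      rw [Finset.sum_comm]
      exact Finset.sum_congr rfl fun i _ => Finset.sum_congr rfl fun k _ => by rw [mul_comm]
    | add a b ha hb =>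
      intro j
      simp only [map_add, AddMemClass.coe_add, add_mul, ha, hb, Matrix.add_apply, add_smul,
        Finset.sum_add_distrib]
  have hzero : Submodule.span K (Set.range v) ≤ LinearMap.ker (LinearMap.mulLeft K (φ f : E)) := by
    rw [Submodule.span_le]
    rintro _ ⟨j, rfl⟩
    simp [hψ, hf.matrix_of_matrix K ψ]
  exact Subtype.ext (by simpa using hzero hone)

variable {X : Type*} {Λ : FreeMonoid X →* E} {ℓ : ℕ}

lemma mul_mem_wordSpan_of_mem_adjoin (h : ∀ u, u.length = ℓ → Λ u ∈ wordSpan K Λ ℓ) {b : E}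
    (hb : b ∈ Algebra.adjoin F (Set.range fun x => Λ (FreeMonoid.of x))) :
    ∀ y ∈ wordSpan K Λ ℓ, b * y ∈ wordSpan K Λ ℓ := by
  induction hb using Algebra.adjoin_induction with
  | mem b hb =>
    obtain ⟨x, rfl⟩ := hb
    intro y hy
    induction hy using Submodule.span_induction with
    | mem y hy =>
      obtain ⟨u, hu, rfl⟩ := hy
      rw [← map_mul]
      have hlength : (FreeMonoid.of x * u).length ≤ ℓ := by
        rw [FreeMonoid.length_mul, FreeMonoid.length_of, add_comm]
        exact hu
      exact hlength.lt_or_eq.elim mem_wordSpan (h _)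
    | zero => simp
    | add y z _ _ hy hz => rw [mul_add]; exact add_mem hy hz
    | smul c y _ hy => rw [mul_smul_comm]; exact Submodule.smul_mem _ c hy
  | algebraMap r =>
    intro y hy
    rw [← Algebra.smul_def]
    exact Submodule.smul_of_tower_mem _ r hy
  | add b c _ _ hb hc => exact fun y hy => by rw [add_mul]; exact add_mem (hb y hy) (hc y hy)
  | mul b c _ _ hb hc => exact fun y hy => by rw [mul_assoc]; exact hb _ (hc y hy)

lemma exists_satisfiesMatrixIdentities_of_mem_wordSpan [Infinite F] [Finite X] (hℓ : 0 < ℓ)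
    (h : ∀ u, u.length = ℓ → Λ u ∈ wordSpan K Λ ℓ) :
    ∃ s, SatisfiesMatrixIdentities F
      (Algebra.adjoin F (Set.range fun x => Λ (FreeMonoid.of x))) s := by
  obtain ⟨s, v, -, hv⟩ := ((List.finite_length_lt X ℓ).image Λ).fin_param
  have hspan : Submodule.span K (Set.range v) = wordSpan K Λ ℓ := by
    rw [hv]
    rfl
  refine ⟨s, fun Y f hf => isPolyIdentity_of_mul_mem_span (K := K) (v := v) hf ?_ fun b hb i => ?_⟩
  · rw [hspan, ← map_one Λ]
    exact mem_wordSpan hℓ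
  · rw [hspan]
    exact mul_mem_wordSpan_of_mem_adjoin h hb _ (hspan ▸ Submodule.subset_span ⟨i, rfl⟩)

end ModulesOverWords

section ExchangeRecursion

/-- The recursion of `exchangeSum_nil` and `exchangeSum_cons` for a function `Q` with values in `M'`
of a list of placed elements, an external factor and an element of an `A`-module `M`, whose value on
the empty list is a translate under `j`; `T` plays the role of the trace. -/
structure IsExchangeRecursion {A M M' : Type*} [Mul A] [SMul A M] [AddCommGroup M']
    (T : A → M → M) (j : M → M') (Q : List A → A → M → M') : Prop where
  nil (z : A) (m : M) : Q [] z m = j (z • m)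
  cons (w : A) (S : List A) (z : A) (m : M) : Q (w :: S) z m = Q S z (T w m) -
    ((leftMultiples w S).map fun S' => Q S' z m).sum - Q S (w * z) m

lemma exists_sum_map_eq {K M M' ι : Type*} [CommRing K] [AddCommGroup M] [Module K M]
    [AddCommGroup M'] {j : M →+ M'} {V : Submodule K (Module.End K M)} {q : ι → M → M'}
    {x : ι → Module.End K M} (l : List ι)
    (h : ∀ i ∈ l, ∃ c ∈ V, ∀ m, q i m = j ((x i + c) m)) :
    ∃ c ∈ V, ∀ m, (l.map fun i => q i m).sum = j (((l.map x).sum + c) m) := by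
  induction l with
  | nil => exact ⟨0, V.zero_mem, by simp⟩
  | cons i l ih =>
    simp only [List.forall_mem_cons] at h
    obtain ⟨c, hc, hq⟩ := h.1
    obtain ⟨d, hd, hl⟩ := ih h.2
    refine ⟨c + d, V.add_mem hc hd, fun m => ?_⟩
    rw [List.map_cons, List.sum_cons, hq, hl, ← map_add, ← LinearMap.add_apply, List.map_cons,
      List.sum_cons, add_add_add_comm]

variable {A K M M' X : Type*} [Ring A] [CommRing K] [AddCommGroup M] [Module A M] [Module K M]
  [AddCommGroup M'] {τ : A → K} {j : M →+ M'} {Q : List A → A → M → M'}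

/-- Since `τ` has values in scalars, every trace shortens the words that remain. -/
lemma IsExchangeRecursion.exists_eq_exchangeLead_add
    (hQ : IsExchangeRecursion (fun w m => τ w • m) j Q) {Λ : FreeMonoid X →* Module.End K M}
    {e : FreeMonoid X →* A} (hΛ : ∀ u m, Λ u m = e u • m) (k : ℕ) (S : List (FreeMonoid X))
    (z : FreeMonoid X) (hk : S.length = k) (hS : ∀ u ∈ S, u ≠ 1) :
    ∃ c ∈ wordSpan K Λ ((S.map FreeMonoid.length).sum + z.length),
      ∀ m, Q (S.map e) (e z) m = j ((exchangeLead k (S.map Λ) (Λ z) + c) m) := by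
  induction k generalizing S z with
  | zero =>
    obtain rfl := List.length_eq_zero_iff.mp hk
    exact ⟨0, zero_mem _, fun m => by simp [exchangeLead, hQ.nil, hΛ]⟩
  | succ k ih =>
    obtain ⟨w, S, rfl⟩ := List.exists_cons_of_length_eq_add_one hk
    have hk : S.length = k := by simpa using hk
    simp only [List.forall_mem_cons] at hS
    have hw : 0 < w.length := Nat.pos_of_ne_zero fun h => hS.1 (FreeMonoid.length_eq_zero.mp h)
    obtain ⟨c₁, hc₁, htrace⟩ := ih S z hk hS.2
    obtain ⟨c₂, hc₂, hlast⟩ := ih S (w * z) hk hS.2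
    obtain ⟨c₃, hc₃, hsum⟩ := exists_sum_map_eq (j := j) (leftMultiples w S)
      (V := wordSpan K Λ (((w :: S).map FreeMonoid.length).sum + z.length))
      (q := fun T m => Q (T.map e) (e z) m) (x := fun T => exchangeLead k (T.map Λ) (Λ z))
      fun T hT => by
        have h := ih T z ((length_of_mem_leftMultiples hT).trans hk)
          (forall_mem_of_mem_leftMultiples (p := (· ≠ 1)) (fun s hs h => hs ?_) hS.2 hT)
        · rwa [sum_map_of_mem_leftMultiples FreeMonoid.length_mul hT] at h
        · rw [← FreeMonoid.length_eq_zero] at h ⊢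
          rw [FreeMonoid.length_mul] at h
          omega
    refine ⟨τ (e w) • (exchangeLead k (S.map Λ) (Λ z) + c₁) - c₃ - c₂, ?_, fun m => ?_⟩
    · refine sub_mem (sub_mem (Submodule.smul_mem _ _ (wordSpan_mono ?_ (add_mem
        (exchangeLead_mem_wordSpan Λ k S z) (wordSpan_mono (Nat.le_succ _) hc₁)))) hc₃) ?_
      · simp only [List.map_cons (f := FreeMonoid.length), List.sum_cons]
        omega
      · convert hc₂ using 2
        simp only [List.map_cons (f := FreeMonoid.length), List.sum_cons, FreeMonoid.length_mul]
        ring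
    · rw [List.map_cons (f := e), hQ.cons, htrace, leftMultiples_map (map_mul e), List.map_map,
        Function.comp_def, hsum, ← map_mul e, hlast, ← map_sub, ← map_sub,
        List.map_cons (f := Λ), exchangeLead, leftMultiples_map (map_mul Λ), List.map_map,
        ← map_mul Λ, map_smul]
      congr 1
      simp only [Function.comp_def, LinearMap.add_apply, LinearMap.sub_apply, LinearMap.neg_apply,
        LinearMap.smul_apply]
      abel

lemma IsExchangeRecursion.exchangeLead_mem_wordSpan
    (hQ : IsExchangeRecursion (fun w m => τ w • m) j Q) (hj : Function.Injective j)
    {Λ : FreeMonoid X →* Module.End K M} {e : FreeMonoid X →* A} (hΛ : ∀ u m, Λ u m = e u • m)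
    {S : List (FreeMonoid X)} (hzero : ∀ m, Q (S.map e) 1 m = 0) (hS : ∀ u ∈ S, u ≠ 1) :
    exchangeLead S.length (S.map Λ) 1 ∈ wordSpan K Λ (S.map FreeMonoid.length).sum := by
  obtain ⟨c, hc, h⟩ := hQ.exists_eq_exchangeLead_add hΛ _ S 1 rfl hS
  have hsum : exchangeLead S.length (S.map Λ) 1 + c = 0 := by
    ext m
    refine hj ?_
    rw [← map_one Λ, ← h, map_one, hzero]
    simp
  rw [eq_neg_of_add_eq_zero_left hsum]
  exact neg_mem (by simpa using hc)

variable {F : Type*} [Field F] [CharZero F] [Algebra F A] [Module F M] [IsScalarTower F A M]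

lemma IsExchangeRecursion.exists_smul_eq_zero [Algebra F K] [IsScalarTower F K M]
    [SMulCommClass A K M] [Finite X] {a : X → A} (ha : Algebra.adjoin F (Set.range a) = ⊤)
    (hQ : IsExchangeRecursion (fun w m => τ w • m) j Q) (hj : Function.Injective j) {n : ℕ}
    (hzero : ∀ S z m, n ≤ S.length → Q S z m = 0) :
    ∃ s, ∀ (Y : Type) (f : FreeAlgebra F Y), IsPolyIdentity (Matrix (Fin s) (Fin s) F) f →
      ∀ (φ : FreeAlgebra F Y →ₐ[F] A) (m : M), φ f • m = 0 := by
  let L : A →ₐ[F] Module.End K M := Algebra.lsmul F K M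
  let Λ : FreeMonoid X →* Module.End K M := (L : A →* Module.End K M).comp (FreeMonoid.lift a)
  obtain ⟨N, hN⟩ := exists_mem_wordSpan_length (K := K) (Λ := Λ) F (n := n) fun S hn hS => by
    rw [← hn]
    exact hQ.exchangeLead_mem_wordSpan hj (fun _ _ => rfl)
      (fun m => hzero _ _ m (by simp [hn])) hS
  obtain ⟨s, hs⟩ := exists_satisfiesMatrixIdentities_of_mem_wordSpan (F := F) N.succ_pos
    fun u hu => by simpa only [hu] using hN u (by omega)
  have hmem (b : A) : L b ∈ Algebra.adjoin F (Set.range fun x => Λ (FreeMonoid.of x)) := by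
    have hrange : (Set.range fun x => Λ (FreeMonoid.of x)) = L '' Set.range a := by
      rw [← Set.range_comp]
      exact congrArg Set.range (funext fun x => by simp [Λ])
    rw [hrange, ← AlgHom.map_adjoin, ha]
    exact ⟨b, Algebra.mem_top, rfl⟩
  refine ⟨s, fun Y f hf φ m => ?_⟩
  have h := hs Y f hf ((L.codRestrict _ hmem).comp φ)
  exact LinearMap.congr_fun (congrArg Subtype.val h) m

/-- The traces generate a commutative ring over which `A` acts linearly. -/
lemma IsExchangeRecursion.exists_smul_eq_zero_of_commute [Finite X] {a : X → A}
    (ha : Algebra.adjoin F (Set.range a) = ⊤) {T : A → Module.End A M}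
    (hT : ∀ a b, Commute (T a) (T b)) (hQ : IsExchangeRecursion (fun w => T w) j Q)
    (hj : Function.Injective j) {n : ℕ} (hzero : ∀ S z m, n ≤ S.length → Q S z m = 0) :
    ∃ s, ∀ (Y : Type) (f : FreeAlgebra F Y), IsPolyIdentity (Matrix (Fin s) (Fin s) F) f →
      ∀ (φ : FreeAlgebra F Y →ₐ[F] A) (m : M), φ f • m = 0 := by
  have hcomm : IsMulCommutative (Algebra.adjoin F (Set.range T)) :=
    Algebra.isMulCommutative_adjoin F (by rintro _ ⟨b, rfl⟩ _ ⟨c, rfl⟩; exact hT b c)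
  let τ (w : A) : Algebra.adjoin F (Set.range T) := ⟨T w, Algebra.subset_adjoin ⟨w, rfl⟩⟩
  open scoped IsMulCommutative in
  exact IsExchangeRecursion.exists_smul_eq_zero (τ := τ) ha hQ hj hzero

end ExchangeRecursion

section DoublyAlternatingAnnihilator

variable {F A ι X : Type*} [Field F] [CharZero F] [Ring A] [Algebra F A] [Fintype ι]
  [DecidableEq ι]

/-- The trace of left multiplication by `a` over the first set of variables, on the doubly
alternating functions. -/
def traceInl (a : A) : Module.End A (doublyAlternating F A ι) where
  toFun f := ⟨traceAt Function.Embedding.inl a f, traceAt_mem_doublyAlternating a f.2⟩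
  map_add' _ _ := Subtype.ext (funext fun _ => Finset.sum_add_distrib)
  map_smul' b _ := Subtype.ext (funext fun _ => (Finset.mul_sum _ _ b).symm)

lemma isExchangeRecursion_exchangeSum (hA : SatisfiesCapelli A (Option ι)) :
    IsExchangeRecursion (fun w => traceInl (F := F) w)
      (doublyAlternating F A ι).subtype.toAddMonoidHom
      fun S z f => exchangeSum Function.Embedding.inl S z f.1 where
  nil z f := funext (exchangeSum_nil hA f.2 z)
  cons w S z _ := exchangeSum_cons w S z

lemma SatisfiesCapelli.exists_mul_eq_zero [Finite X] {a : X → A}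
    (ha : Algebra.adjoin F (Set.range a) = ⊤) (hA : SatisfiesCapelli A (Option ι)) :
    ∃ s, ∀ (Y : Type) (f : FreeAlgebra F Y), IsPolyIdentity (Matrix (Fin s) (Fin s) F) f →
      ∀ φ : FreeAlgebra F Y →ₐ[F] A, ∀ h ∈ doublyAlternating F A ι, ∀ x, φ f * h x = 0 := by
  obtain ⟨s, hs⟩ := (isExchangeRecursion_exchangeSum (F := F) hA).exists_smul_eq_zero_of_commute ha
    (fun b c => LinearMap.ext fun f => Subtype.ext (traceAt_comm hA f.2 b c))
    Subtype.val_injective fun _ z _ hS => exchangeSum_eq_zero hS z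
  exact ⟨s, fun Y f hf φ h hh x => congrFun (congrArg Subtype.val (hs Y f hf φ ⟨h, hh⟩)) x⟩

end DoublyAlternatingAnnihilator

section CapelliIdeal

variable {F A B ι κ : Type*} [Ring A] [Ring B] [Fintype ι] [DecidableEq ι]

lemma alternatingEval_rename [Fintype κ] [DecidableEq κ] (e : ι ≃ κ) (l : List (ι ⊕ A))
    (x : κ → A) :
    alternatingEval (wordSubst (fun i => [Sum.inl (e i)]) l) x = alternatingEval l (x ∘ e) := by
  refine Fintype.sum_equiv e.symm.permCongr _ _ fun σ => ?_
  rw [wordEval_rename, Equiv.Perm.sign_permCongr]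
  congr 2
  funext i
  simp

lemma SatisfiesCapelli.of_equiv [Fintype κ] [DecidableEq κ] (hA : SatisfiesCapelli A ι)
    (e : ι ≃ κ) : SatisfiesCapelli A κ := fun l hl x => by
  have h := alternatingEval_rename e.symm l (x ∘ e)
  rw [hA _ (hl.rename e.symm)] at h
  rw [h, Function.comp_assoc, Equiv.self_comp_symm, Function.comp_id]

variable (A ι) in
/-- The values on `A` of the Capelli polynomials alternating in variables indexed by `ι`. -/
def capelliValues : Set A := {u | ∃ l : List (ι ⊕ A), IsMultilinearWord l ∧
  ∃ x, alternatingEval l x = u}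

lemma mul_mem_capelliValues (b : A) {u : A} (hu : u ∈ capelliValues A ι) :
    b * u ∈ capelliValues A ι := by
  obtain ⟨l, hl, x, rfl⟩ := hu
  refine ⟨Sum.inr b :: l, hl, x, ?_⟩
  simp only [alternatingEval, Finset.mul_sum, mul_smul_comm, wordEval_cons_inr]

lemma capelliValues_mul_mem (b : A) {u : A} (hu : u ∈ capelliValues A ι) :
    u * b ∈ capelliValues A ι := by
  obtain ⟨l, hl, x, rfl⟩ := hu
  refine ⟨l ++ [Sum.inr b], by simpa [IsMultilinearWord] using hl, x, ?_⟩
  simp only [alternatingEval, Finset.sum_mul, smul_mul_assoc, wordEval_append, wordEval_cons_inr,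
    wordEval_nil, mul_one]

variable (A ι) in
/-- The two-sided ideal generated by the values of the Capelli polynomials; these are closed under
multiplication by `A` from both sides, so additive combinations suffice. -/
def capelliIdeal : Ideal A where
  __ := AddSubmonoid.closure (capelliValues A ι)
  smul_mem' b _ hu := (AddSubmonoid.closure_le
    (S := (AddSubmonoid.closure (capelliValues A ι)).comap (AddMonoidHom.mulLeft b))).mpr
      (fun _ hv => AddSubmonoid.subset_closure (mul_mem_capelliValues b hv)) hu

lemma mem_capelliIdeal_of_mem_capelliValues {u : A} (hu : u ∈ capelliValues A ι) :
    u ∈ capelliIdeal A ι := AddSubmonoid.subset_closure hu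

instance : (capelliIdeal A ι).IsTwoSided where
  mul_mem_of_left b hu := (AddSubmonoid.closure_le
    (S := (AddSubmonoid.closure (capelliValues A ι)).comap (AddMonoidHom.mulRight b))).mpr
      (fun _ hv => AddSubmonoid.subset_closure (capelliValues_mul_mem b hv)) hu

lemma alternatingEval_map (g : A →+* B) (l : List (ι ⊕ A)) (x : ι → A) :
    alternatingEval (l.map (Sum.map id g)) (g ∘ x) = g (alternatingEval l x) := by
  simp only [alternatingEval, Function.comp_assoc, wordEval_map, map_sum, Units.smul_def,
    map_zsmul]

lemma satisfiesCapelli_quotient : SatisfiesCapelli (A ⧸ capelliIdeal A ι) ι := by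
  intro l hl x
  have hmk : Function.Surjective (Ideal.Quotient.mk (capelliIdeal A ι)) :=
    Ideal.Quotient.mk_surjective
  obtain ⟨x, rfl⟩ := hmk.comp_left x
  obtain ⟨l, rfl⟩ := List.map_surjective_iff.mpr (Function.surjective_id.sumMap hmk) l
  rw [IsMultilinearWord, wordVars_map] at hl
  rw [alternatingEval_map, Ideal.Quotient.eq_zero_iff_mem]
  exact mem_capelliIdeal_of_mem_capelliValues ⟨l, hl, x, rfl⟩

variable [Field F] [Algebra F A]

lemma alternatingEval_mul_mem_doublyAlternating {l l' : List (ι ⊕ A)} (hl : IsMultilinearWord l)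
    (hl' : IsMultilinearWord l') :
    (fun x => alternatingEval l (x ∘ Sum.inl) * alternatingEval l' (x ∘ Sum.inr)) ∈
      doublyAlternating F A ι := by
  refine ⟨?_, fun τ x => ⟨?_, ?_⟩⟩
  · exact mul_mem_multilinearFunctions (alternatingEval_mem_multilinearFunctions hl)
      (alternatingEval_mem_multilinearFunctions hl')
  · rw [← smul_mul_assoc, ← alternatingEval_comp_perm]
    rfl
  · rw [← mul_smul_comm, ← alternatingEval_comp_perm]
    rfl

lemma mul_mul_eq_zero_of_mem_capelliIdeal {b u v : A}
    (hb : ∀ h ∈ doublyAlternating F A ι, ∀ x, b * h x = 0) (hu : u ∈ capelliIdeal A ι)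
    (hv : v ∈ capelliIdeal A ι) : b * (u * v) = 0 := by
  induction hu, hv using AddSubmonoid.closure_induction₂ with
  | mem u v hu hv =>
    obtain ⟨l, hl, x, rfl⟩ := hu
    obtain ⟨l', hl', y, rfl⟩ := hv
    exact hb _ (alternatingEval_mul_mem_doublyAlternating hl hl') (Sum.elim x y)
  | zero_left v _ => rw [zero_mul, mul_zero]
  | zero_right u _ => rw [mul_zero, mul_zero]
  | add_left u u' v _ _ _ hu hu' => rw [add_mul, mul_add, hu, hu', add_zero]
  | add_right u u' v _ _ _ hu hu' => rw [mul_add, mul_add, hu, hu', add_zero]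

end CapelliIdeal

section FiniteGeneration

variable {F : Type*} [Field F]

lemma polyIdentities_matrix_add_le_mul (X : Type*) (m n : ℕ) :
    polyIdentities F X (Matrix (Fin (m + n)) (Fin (m + n)) F) ≤
      polyIdentities F X (Matrix (Fin m) (Fin m) F) *
        polyIdentities F X (Matrix (Fin n) (Fin n) F) := by
  refine le_trans (fun f hf => ?_) (polyIdentities_matrix_sum_le_mul F X (Fin m) (Fin n))
  exact IsPolyIdentity.of_injective (B := Matrix (Fin (m + n)) (Fin (m + n)) F) hf
    (Matrix.reindexAlgEquiv F F finSumFinEquiv).toAlgHom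
    (Matrix.reindexAlgEquiv F F finSumFinEquiv).injective

variable {A : Type*} [Ring A] [Algebra F A]

lemma SatisfiesMatrixIdentities.of_quotient {I : Ideal A} [I.IsTwoSided] {s N : ℕ}
    (hI : SatisfiesMatrixIdentities F (A ⧸ I) N)
    (hs : ∀ (X : Type) (f : FreeAlgebra F X), IsPolyIdentity (Matrix (Fin s) (Fin s) F) f →
      ∀ φ : FreeAlgebra F X →ₐ[F] A, ∀ u ∈ I, ∀ v ∈ I, φ f * (u * v) = 0) :
    SatisfiesMatrixIdentities F A (s + (N + N)) := by
  intro X f hf φ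
  have hmem (g) (hg : g ∈ polyIdentities F X (Matrix (Fin N) (Fin N) F)) : φ g ∈ I :=
    Ideal.Quotient.eq_zero_iff_mem.mp (hI X g hg ((Ideal.Quotient.mkₐ F I).comp φ))
  have hprod : f ∈ polyIdentities F X (Matrix (Fin s) (Fin s) F) *
      (polyIdentities F X (Matrix (Fin N) (Fin N) F) *
        polyIdentities F X (Matrix (Fin N) (Fin N) F)) :=
    mul_le_mul_right (polyIdentities_matrix_add_le_mul X N N) _
      (polyIdentities_matrix_add_le_mul X s (N + N) hf)
  suffices h : _ ≤ LinearMap.ker φ.toLinearMap from h hprod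
  refine Submodule.mul_le.mpr fun g hg k hk => ?_
  change φ (g * k) = 0
  induction hk using Submodule.mul_induction_on' with
  | mem_mul_mem u hu v hv =>
    rw [map_mul, map_mul]
    exact hs X g hg φ _ (hmem u hu) _ (hmem v hv)
  | add x _ y _ hx hy => rw [mul_add, map_add, hx, hy, add_zero]

variable [CharZero F]

theorem SatisfiesCapelli.exists_satisfiesMatrixIdentities {X : Type*} [Finite X] {n : ℕ}
    {a : X → A} (ha : Algebra.adjoin F (Set.range a) = ⊤) (hA : SatisfiesCapelli A (Fin n)) :
    ∃ N, SatisfiesMatrixIdentities F A N := by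
  induction n generalizing A with
  | zero =>
    have hone : (1 : A) = 0 := by
      simpa [alternatingEval] using hA [] ⟨List.nodup_nil, fun i => i.elim0⟩ Fin.elim0
    exact ⟨0, fun Y f _ φ => eq_zero_of_zero_eq_one hone.symm _⟩
  | succ n ih =>
    obtain ⟨s, hs⟩ := (hA.of_equiv (finSuccEquiv n)).exists_mul_eq_zero ha
    let q := Ideal.Quotient.mkₐ F (capelliIdeal A (Fin n))
    have hq : Algebra.adjoin F (Set.range (q ∘ a)) = ⊤ := by
      rw [Set.range_comp, ← AlgHom.map_adjoin, ha, Algebra.map_top, AlgHom.range_eq_top]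
      exact Ideal.Quotient.mkₐ_surjective F _
    obtain ⟨N, hN⟩ := ih hq satisfiesCapelli_quotient
    exact ⟨s + (N + N), hN.of_quotient fun Y f hf φ u hu v hv =>
      mul_mul_eq_zero_of_mem_capelliIdeal (hs Y f hf φ) hu hv⟩

theorem exists_satisfiesMatrixIdentities_of_isPolyIdentity [Algebra.FiniteType F A] {X : Type*}
    {f : FreeAlgebra F X} (hf : f ≠ 0) (hA : IsPolyIdentity A f) :
    ∃ N, SatisfiesMatrixIdentities F A N := by
  obtain ⟨k, β, hβ, hβA⟩ := exists_permutation_identity hf hA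
  obtain ⟨d, α, hα1, hα⟩ := exists_sparse_identity hβ hβA
  obtain ⟨S, hS⟩ := Algebra.FiniteType.out (R := F) (A := A)
  have ha : Algebra.adjoin F (Set.range (Subtype.val : S → A)) = ⊤ := by
    rw [← hS]
    congr 1
    exact Subtype.range_coe
  obtain ⟨m, hm⟩ := exists_satisfiesCapelli hα1 hα ha
  exact hm.exists_satisfiesMatrixIdentities ha

end FiniteGeneration

theorem gi_ideal_contains_finite_dimensional_general
    (F : Type) [Field F] [CharZero F] (G : Type) [AddCommGroup G] [Finite G] [DecidableEq G]
    (A : Type*) [Ring A] [Algebra F A] [Algebra.FiniteType F A] {X : Type*} {f : FreeAlgebra F X}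
    (hf : f ≠ 0) (hA : IsPolyIdentity A f) :
    ∃ C : GrStarAlgebra F G, FiniteDimensional F C.carrier ∧
      ∀ g ∈ giIdeal F G C, IsPolyIdentity A g := by
  obtain ⟨N, hN⟩ := exists_satisfiesMatrixIdentities_of_isPolyIdentity hf hA
  exact ⟨exchangeGroupAlgebra F G (Matrix (Fin N) (Fin N) F),
    finiteDimensional_exchangeGroupAlgebra,
    fun g hg => hN _ g (isPolyIdentity_of_mem_giIdeal_exchangeGroupAlgebra hg)⟩

/-- The ideal of graded `*`-identities of a finitely generated `G`-graded PI-algebra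
with graded involution (over a field of characteristic zero, `G` finite abelian)
contains the ideal of graded `*`-identities of some finite dimensional `G`-graded
algebra with involution. -/
theorem gi_ideal_contains_finite_dimensional
    (F : Type) [Field F] [CharZero F]
    (G : Type) [AddCommGroup G] [Fintype G] [DecidableEq G]
    (A : GrStarAlgebra F G) (hfg : Algebra.FiniteType F A.carrier)
    (hPI : ∃ (n : ℕ) (f : FreeAlgebra F (Fin n)), f ≠ 0 ∧
      ∀ φ : FreeAlgebra F (Fin n) →ₐ[F] A.carrier, φ f = 0) :
    ∃ C : GrStarAlgebra F G, FiniteDimensional F C.carrier ∧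
      giIdeal F G C ⊆ giIdeal F G A := by
  obtain ⟨n, f, hf, hA⟩ := hPI
  obtain ⟨C, hC, hCA⟩ := gi_ideal_contains_finite_dimensional_general F G A.carrier hf hA
  exact ⟨C, hC, fun g hg φ _ _ => hCA g hg φ⟩
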